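/- Let p : X̃ → X be a free G-cover of a finite connected graph X of genus g, with finite abelian Galois group G, and let ρ : G → ℂ* be a nontrivial character. Then the reciprocal of the metric Artin L-function has Taylor expansion at s = 1 given by L_M(s, x_e, X̃/X, ρ)^{-1} = 2^{g−1} · (−1)^{g−1} · P_{X̃/X,ρ}(x_e) · (s−1)^{g−1} + O((s−1)^g), where P_{X̃/X,ρ} is the weight polynomial of the ρ-twisted matroid of the cover. -/

import Mathlib

/-!
Write `t_e = s ^ x_e`. The reciprocal `L`-function is `det (1 - W)` with `W` the twisted
non-backtracking matrix on half-edges. The three-term determinant formula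
(`SerreGraph.det_edge_eq_det_vertex`) turns it into `∏ (1 - t_e ^ 2)` times the determinant of a
matrix indexed by the vertices. As `s → 1`, each factor satisfies
`(1 - t_e ^ 2) / (s - 1) → - 2 x_e`, and `s - 1` times the vertex matrix tends to `- 1 / 2` times the
twisted Laplacian with edge conductances `1 / x_e`. Hence `det (1 - W) / (s - 1) ^ (|E| - |V|)`
converges to `(-2) ^ (|E| - |V|) ∏ x_e` times the determinant of this Laplacian
(`SerreGraph.tendsto_LMInv_div`).

That determinant is evaluated by a matrix-tree theorem (`SerreGraph.prod_mul_det_lapl`). The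
Laplacian is a weighted Gram matrix of the twisted incidence matrix, so by Cauchy–Binet
(`det_sum_rankOne`) its determinant is a sum over the sets of `|V|` edges, that is over the
complements of the sets `F` of `g - 1` edges. The summand of `F` splits over the components of
`X ∖ F`. A component with fewer edges than vertices contributes zero, and if there is none, then every
component has as many edges as vertices. Such a component contains a cycle `P` and contributes
`|1 - ρ(η(P))|²` (`SerreGraph.det_gram_of_edgeCycle`): the columns along the cycle combine to
`1 - conj (ρ(η(P)))` times a basis vector, so Cramer's rule reduces the claim to the triangular
incidence matrix of a spanning tree. This argument works for any cycle of the edge set, so no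
uniqueness of the cycle is needed.

Finally `s ↦ det (1 - W)` is analytic at `1`. Subtracting the leading term leaves an analytic function
which is `o((s - 1) ^ (g - 1))`; its order of vanishing is thus at least `g`, which is the asserted
bound.
-/

set_option autoImplicit false
set_option maxHeartbeats 1000000

/-- A graph in the sense of Serre: a finite set of vertices, a finite set of
half-edges with a fixed-point-free involution, and a root map. -/
structure SerreGraph where
  V : Type
  H : Type
  fintypeV : Fintype V
  fintypeH : Fintype H
  decEqV : DecidableEq V
  decEqH : DecidableEq H
  inv : H → H
  inv_inv : ∀ h, inv (inv h) = h
  inv_ne : ∀ h, inv h ≠ h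
  root : H → V

attribute [instance] SerreGraph.fintypeV SerreGraph.fintypeH SerreGraph.decEqV SerreGraph.decEqH

namespace SerreGraph

/-- Edges are orbits `{h, inv h}` of the involution. -/
def Edge (X : SerreGraph) : Type := Quot (fun h h' : X.H => h' = X.inv h)

/-- The edge underlying a half-edge. -/
def edgeOf (X : SerreGraph) (h : X.H) : X.Edge := Quot.mk _ h

lemma edgeOf_surjective (X : SerreGraph) : Function.Surjective X.edgeOf :=
  fun e => Quot.exists_rep e

lemma edgeOf_inv (X : SerreGraph) (h : X.H) : X.edgeOf (X.inv h) = X.edgeOf h :=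
  Quot.sound (X.inv_inv h).symm

instance (X : SerreGraph) : Finite X.Edge := Quot.finite _
noncomputable instance (X : SerreGraph) : Fintype X.Edge := Fintype.ofFinite _
noncomputable instance (X : SerreGraph) : DecidableEq X.Edge := Classical.decEq _

/-- One step of adjacency in the graph obtained by deleting the edges in `F`. -/
def adjStep (X : SerreGraph) (F : Finset X.Edge) (u v : X.V) : Prop :=
  ∃ h : X.H, X.root h = u ∧ X.root (X.inv h) = v ∧ X.edgeOf h ∉ F

/-- `u` and `v` lie in the same connected component of `X ∖ F`. -/
def compRel (X : SerreGraph) (F : Finset X.Edge) (u v : X.V) : Prop :=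
  Relation.ReflTransGen (X.adjStep F) u v

/-- A graph is connected if it is nonempty and any two vertices are joined by a path. -/
def Connected (X : SerreGraph) : Prop :=
  Nonempty X.V ∧ ∀ u v : X.V, X.compRel ∅ u v

/-- The vertex set of the connected component of `v` in `X ∖ F`. -/
noncomputable def compVerts (X : SerreGraph) (F : Finset X.Edge) (v : X.V) : Finset X.V :=
  (Set.toFinite {u | X.compRel F v u}).toFinset

/-- The set of connected components (as vertex sets) of `X ∖ F`. -/
noncomputable def components (X : SerreGraph) (F : Finset X.Edge) : Finset (Finset X.V) :=
  Finset.univ.image (X.compVerts F)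

/-- The edges of `X ∖ F` belonging to a component with vertex set `C`. -/
noncomputable def edgesIn (X : SerreGraph) (F : Finset X.Edge) (C : Finset X.V) :
    Finset X.Edge :=
  (Set.toFinite {e | e ∉ F ∧ ∃ h, X.edgeOf h = e ∧ X.root h ∈ C}).toFinset

/-- A spanning tree: a spanning-connected set of edges of cardinality `|V| - 1`. -/
def IsSpanningTree (X : SerreGraph) (T : Finset X.Edge) : Prop :=
  (∀ u v : X.V, Relation.ReflTransGen
      (fun a b => ∃ h, X.root h = a ∧ X.root (X.inv h) = b ∧ X.edgeOf h ∈ T) u v) ∧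
  T.card + 1 = Fintype.card X.V

noncomputable def spanningTrees (X : SerreGraph) : Finset (Finset X.Edge) :=
  (Set.toFinite {T | X.IsSpanningTree T}).toFinset

/-- The number of spanning trees of `X`; by Kirchhoff's theorem this is `|Jac(X)|`. -/
noncomputable def numSpanningTrees (X : SerreGraph) : ℕ := X.spanningTrees.card

/-- The genus `g(X) = |E(X)| - |V(X)| + 1` of a (connected) graph. -/
noncomputable def genus (X : SerreGraph) : ℕ :=
  Fintype.card X.Edge + 1 - Fintype.card X.V

/-- The Jacobian polynomial `J_X = ∑_T ∏_{e ∉ T} x_e`, summed over spanning trees. -/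
noncomputable def jacobianPoly (X : SerreGraph) (R : Type) [CommRing R] :
    MvPolynomial X.Edge R :=
  ∑ T ∈ X.spanningTrees, ∏ e ∈ Tᶜ, MvPolynomial.X e

/-- A closed path: a nonempty list of half-edges, consecutively matched head-to-tail,
including from the last one back to the first. -/
def IsClosedPath (X : SerreGraph) (l : List X.H) : Prop :=
  l ≠ [] ∧ List.Chain' (fun a b => X.root (X.inv a) = X.root b) (l ++ l.take 1)

/-- A cycle with pairwise distinct edges, all belonging to `S`. -/
def IsEdgeCycle (X : SerreGraph) (S : Finset X.Edge) (l : List X.H) : Prop :=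
  X.IsClosedPath l ∧ (∀ h ∈ l, X.edgeOf h ∈ S) ∧ (l.map X.edgeOf).Nodup

/-- An edge is a loop if its two root vertices coincide. -/
def IsLoop (X : SerreGraph) (e : X.Edge) : Prop :=
  ∃ h, X.edgeOf h = e ∧ X.root h = X.root (X.inv h)

/-- An orientation: a choice of half-edge (source half) for every edge. -/
structure Orientation (X : SerreGraph) where
  pick : X.Edge → X.H
  pick_spec : ∀ e, X.edgeOf (pick e) = e

/-- The voltage of a half-edge: `η(e)` if it is traversed in the chosen orientation,
`η(e)⁻¹` otherwise. -/
def halfVoltage {G : Type} [Group G] (X : SerreGraph) (o : X.Orientation)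
    (η : X.Edge → G) (h : X.H) : G :=
  if h = o.pick (X.edgeOf h) then η (X.edgeOf h) else (η (X.edgeOf h))⁻¹

/-- The (Frobenius) voltage of a path of half-edges. -/
def pathVoltage {G : Type} [Group G] (X : SerreGraph) (o : X.Orientation)
    (η : X.Edge → G) (l : List X.H) : G :=
  (l.map (X.halfVoltage o η)).prod

/-- A morphism of Serre graphs. -/
structure Hom (X Y : SerreGraph) where
  vMap : X.V → Y.V
  hMap : X.H → Y.H
  hMap_inv : ∀ h, hMap (X.inv h) = Y.inv (hMap h)
  root_hMap : ∀ h, Y.root (hMap h) = vMap (X.root h)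

/-- The induced map on edges. -/
def Hom.edgeMap {X Y : SerreGraph} (f : Hom X Y) : X.Edge → Y.Edge :=
  Quot.map f.hMap (fun a b hab => by rw [hab, f.hMap_inv])

/-- A morphism is harmonic with local degree function `d` if for every vertex `v`
upstairs and every half-edge `h` rooted at its image, `d v` is the number of
half-edges at `v` mapping to `h`. -/
structure IsHarmonic {X Y : SerreGraph} (f : Hom X Y) (d : X.V → ℕ) : Prop where
  pos : ∀ v, 0 < d v
  balanced : ∀ (v : X.V) (h : Y.H), Y.root h = f.vMap v →
    d v = Nat.card {h' : X.H // X.root h' = v ∧ f.hMap h' = h}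

/-- A harmonic Galois cover with Galois group `G`: a harmonic morphism of degree `|G|`
together with an equivariant `G`-action that is transitive on vertex fibers and simply
transitive on edge fibers. -/
structure GCover (G : Type) [Group G] [Fintype G] (Xt X : SerreGraph)
    extends Hom Xt X where
  d : Xt.V → ℕ
  harm : IsHarmonic toHom d
  deg_eq : ∀ v : X.V,
    ∑ w ∈ Finset.univ.filter (fun w => toHom.vMap w = v), d w = Fintype.card G
  smulV : G → Xt.V → Xt.V
  smulH : G → Xt.H → Xt.H
  one_smulV : ∀ w, smulV 1 w = w
  mul_smulV : ∀ g g' w, smulV (g * g') w = smulV g (smulV g' w)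
  one_smulH : ∀ h, smulH 1 h = h
  mul_smulH : ∀ g g' h, smulH (g * g') h = smulH g (smulH g' h)
  smulH_inv : ∀ g h, smulH g (Xt.inv h) = Xt.inv (smulH g h)
  root_smulH : ∀ g h, Xt.root (smulH g h) = smulV g (Xt.root h)
  vMap_smulV : ∀ g w, toHom.vMap (smulV g w) = toHom.vMap w
  hMap_smulH : ∀ g h, toHom.hMap (smulH g h) = toHom.hMap h
  d_smulV : ∀ g w, d (smulV g w) = d w
  vertex_trans : ∀ w w' : Xt.V, toHom.vMap w = toHom.vMap w' → ∃ g, smulV g w = w'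
  edge_trans : ∀ ht ht' : Xt.H,
    (toHom.hMap ht' = toHom.hMap ht ∨ toHom.hMap ht' = X.inv (toHom.hMap ht)) →
    ∃ g, smulH g ht = ht' ∨ smulH g ht = Xt.inv ht'
  edge_free : ∀ (g : G) (ht : Xt.H),
    (smulH g ht = ht ∨ smulH g ht = Xt.inv ht) → g = 1

namespace GCover

variable {G : Type} [Group G] [Fintype G] {Xt X : SerreGraph}

/-- The cover is free if all local degrees are one. -/
def IsFree (c : GCover G Xt X) : Prop := ∀ w, c.d w = 1

/-- The dilation subgroup of a vertex: the common stabilizer of the vertices in its fiber. -/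
def dilation (c : GCover G Xt X) (v : X.V) : Set G :=
  {g | ∀ w : Xt.V, c.vMap w = v → c.smulV g w = w}

/-- One step of adjacency upstairs, through half-edges lying over `X ∖ F`. -/
def liftStep (c : GCover G Xt X) (F : Finset X.Edge) (a b : Xt.V) : Prop :=
  ∃ ht : Xt.H, Xt.root ht = a ∧ Xt.root (Xt.inv ht) = b ∧ X.edgeOf (c.hMap ht) ∉ F

/-- The number of connected components of the preimage of the component of `v` in `X ∖ F`. -/
noncomputable def numLiftComponents (c : GCover G Xt X) (F : Finset X.Edge) (v : X.V) : ℕ :=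
  Nat.card (Quot (fun a b : {w : Xt.V // X.compRel F v (c.vMap w)} => c.liftStep F a.1 b.1))

/-- The connected component of `v` in `X ∖ F` is `G`-nontrivial, i.e. the restriction of the
cover over it is not isomorphic to the trivial `G`-cover (equivalently, its preimage does
not have exactly `|G|` connected components). -/
def GNontrivialAt (c : GCover G Xt X) (F : Finset X.Edge) (v : X.V) : Prop :=
  c.numLiftComponents F v ≠ Fintype.card G

/-- Independent sets of the matroid `M*(X̃/X)`. -/
def Indep (c : GCover G Xt X) (F : Finset X.Edge) : Prop :=
  ∀ v : X.V, c.GNontrivialAt F v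

/-- Bases of the matroid `M*(X̃/X)`: maximal independent sets. -/
def IsBasisD (c : GCover G Xt X) (F : Finset X.Edge) : Prop :=
  c.Indep F ∧ ∀ F' : Finset X.Edge, F ⊆ F' → c.Indep F' → F' = F

/-- The dilated `G`-voltage assignment `η` (together with a section `σ` of the vertex map)
represents the cover: for each edge `e`, some lift of `e` runs from `σ(s(e))` to
`η(e) • σ(t(e))`. -/
structure IsVoltageRep (c : GCover G Xt X) (o : X.Orientation) (σ : X.V → Xt.V)
    (η : X.Edge → G) : Prop where
  sec : ∀ v, c.vMap (σ v) = v
  lift : ∀ e : X.Edge, ∃ ht : Xt.H, c.hMap ht = o.pick e ∧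
    Xt.root ht = σ (X.root (o.pick e)) ∧
    Xt.root (Xt.inv ht) = c.smulV (η e) (σ (X.root (X.inv (o.pick e))))

/-- The component of `v` in `X ∖ F` is nontrivial for the cover twisted by the character
`ρ`: it contains a vertex whose dilation group has nontrivial image under `ρ`, or a closed
path whose voltage has nontrivial image under `ρ`. -/
def RhoNontrivialAt (c : GCover G Xt X) (o : X.Orientation) (η : X.Edge → G)
    (ρ : G →* ℂ) (F : Finset X.Edge) (v : X.V) : Prop :=
  (∃ u : X.V, X.compRel F v u ∧ ∃ g ∈ c.dilation u, ρ g ≠ 1) ∨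
  (∃ l : List X.H, X.IsClosedPath l ∧
    (∀ h ∈ l, X.edgeOf h ∉ F ∧ X.compRel F v (X.root h)) ∧
    ρ (X.pathVoltage o η l) ≠ 1)

/-- Bases of the `ρ`-twisted matroid `M*(X̃/X, ρ)`: maximal subsets `F` such that every
connected component of `X ∖ F` is `ρ`-nontrivial. -/
def IsBasisRho (c : GCover G Xt X) (o : X.Orientation) (η : X.Edge → G)
    (ρ : G →* ℂ) (F : Finset X.Edge) : Prop :=
  (∀ v : X.V, c.RhoNontrivialAt o η ρ F v) ∧
  ∀ F' : Finset X.Edge, F ⊆ F' → (∀ v : X.V, c.RhoNontrivialAt o η ρ F' v) → F' = F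

end GCover

/-- The weight of a connected component with edge set `S`: `|1 - ρ(η(C))|²` where `η(C)` is
the voltage of its unique cycle, if it has one, and `1` otherwise (tree components). -/
noncomputable def cycleWeight {G : Type} [Group G] (X : SerreGraph) (o : X.Orientation)
    (η : X.Edge → G) (ρ : G →* ℂ) (S : Finset X.Edge) : ℝ := by
  classical exact
  if hc : ∃ l, X.IsEdgeCycle S l then
    ‖(1 : ℂ) - ρ (X.pathVoltage o η hc.choose)‖ ^ 2
  else 1

/-- The weight `w_ρ(F)`: the product of the weights of the connected components of `X ∖ F`. -/
noncomputable def basisWeight {G : Type} [Group G] (X : SerreGraph) (o : X.Orientation)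
    (η : X.Edge → G) (ρ : G →* ℂ) (F : Finset X.Edge) : ℝ :=
  ∏ C ∈ X.components F, cycleWeight X o η ρ (X.edgesIn F C)

/-- The weight `w(M*(X̃/X, ρ))` of the `ρ`-twisted matroid: the sum of the weights of its
bases. -/
noncomputable def GCover.twistedWeight {G : Type} [Group G] [Fintype G] {Xt X : SerreGraph}
    (c : GCover G Xt X) (o : X.Orientation) (η : X.Edge → G) (ρ : G →* ℂ) : ℝ :=
  ∑ F ∈ (Set.toFinite {F : Finset X.Edge | c.IsBasisRho o η ρ F}).toFinset,
    basisWeight X o η ρ F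

/-- The weight polynomial `P_{X̃/X,ρ} = ∑_F w_ρ(F) ∏_{e ∈ F} x_e` of the `ρ`-twisted
matroid, summed over its bases. -/
noncomputable def GCover.twistedWeightPoly {G : Type} [Group G] [Fintype G]
    {Xt X : SerreGraph} (c : GCover G Xt X) (o : X.Orientation) (η : X.Edge → G)
    (ρ : G →* ℂ) : MvPolynomial X.Edge ℝ :=
  ∑ F ∈ (Set.toFinite {F : Finset X.Edge | c.IsBasisRho o η ρ F}).toFinset,
    MvPolynomial.C (basisWeight X o η ρ F) * ∏ e ∈ F, MvPolynomial.X e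

end SerreGraph
namespace SerreGraph

/-- One contraction step: `a` and `b` are joined by an edge belonging to `F`. -/
def contractStep (X : SerreGraph) (F : Finset X.Edge) (a b : X.V) : Prop :=
  ∃ h, X.edgeOf h ∈ F ∧ X.root h = a ∧ X.root (X.inv h) = b

/-- Data exhibiting `Xc` as the contraction of `X` along the edge set `F`: the vertices of
`Xc` are the connected components of the subgraph spanned by `F`, and the half-edges of `Xc`
are the half-edges of `X` not lying on `F`. -/
structure ContractionData (X Xc : SerreGraph) (F : Finset X.Edge) where
  vMap : X.V → Xc.V
  hMap : (h : X.H) → X.edgeOf h ∉ F → Xc.H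
  hMap_injective : ∀ h₁ hh₁ h₂ hh₂, hMap h₁ hh₁ = hMap h₂ hh₂ → h₁ = h₂
  hMap_surjective : ∀ k : Xc.H, ∃ h hh, hMap h hh = k
  hMap_inv : ∀ h hh hh', hMap (X.inv h) hh' = Xc.inv (hMap h hh)
  root_hMap : ∀ h hh, Xc.root (hMap h hh) = vMap (X.root h)
  vMap_surjective : Function.Surjective vMap
  vMap_eq_iff : ∀ u v, vMap u = vMap v ↔ Relation.ReflTransGen (X.contractStep F) u v

/-- The valency of a vertex (loops counted twice). -/
noncomputable def valency (X : SerreGraph) (v : X.V) : ℕ :=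
  Nat.card {h : X.H // X.root h = v}

/-- The Laplacian matrix `L = Q - A` of a graph. -/
noncomputable def lapl (X : SerreGraph) : Matrix X.V X.V ℤ :=
  Matrix.of fun u v =>
    (if u = v then (X.valency u : ℤ) else 0) -
      (Nat.card {h : X.H // X.root h = u ∧ X.root (X.inv h) = v} : ℤ)

/-- The Laplacian as a homomorphism on divisors. -/
noncomputable def laplHom (X : SerreGraph) : (X.V → ℤ) →+ (X.V → ℤ) where
  toFun := fun D u => ∑ v, X.lapl u v * D v
  map_zero' := by funext u; simp
  map_add' := by
    intro a b; funext u
    simp [mul_add, Finset.sum_add_distrib]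

/-- Divisors of total degree zero. -/
noncomputable def div0 (X : SerreGraph) : AddSubgroup (X.V → ℤ) where
  carrier := {D | ∑ v, D v = 0}
  add_mem' := by
    intro a b ha hb
    simp only [Set.mem_setOf_eq, Pi.add_apply] at *
    simp [Finset.sum_add_distrib, ha, hb]
  zero_mem' := by simp
  neg_mem' := by
    intro a ha
    simp only [Set.mem_setOf_eq, Pi.neg_apply] at *
    simp [ha]

/-- The subgroup of principal divisors: the image of the Laplacian. -/
noncomputable def principal (X : SerreGraph) : AddSubgroup (X.V → ℤ) :=
  (laplHom X).range

/-- The Jacobian (critical) group `Jac(X) = Div₀(X) / Im L`. -/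
noncomputable def jac (X : SerreGraph) : Type :=
  X.div0 ⧸ ((X.principal).addSubgroupOf X.div0)

noncomputable instance (X : SerreGraph) : AddCommGroup X.jac :=
  inferInstanceAs (AddCommGroup (X.div0 ⧸ ((X.principal).addSubgroupOf X.div0)))

/-- The pushforward of divisors along a graph morphism. -/
noncomputable def pushforward {Xt X : SerreGraph} (f : Hom Xt X) (D : Xt.V → ℤ) :
    X.V → ℤ :=
  fun v => ∑ w ∈ Finset.univ.filter (fun w => f.vMap w = v), D w

/-- The diagonal valency matrix `Q` (over `ℂ`). -/
noncomputable def qMatrix (X : SerreGraph) : Matrix X.V X.V ℂ :=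
  Matrix.of fun u v => if u = v then (X.valency u : ℂ) else 0

/-- The `ρ`-twisted adjacency matrix `A_ρ`. -/
noncomputable def twistedAdj {G : Type} [Group G] (X : SerreGraph) (o : X.Orientation)
    (η : X.Edge → G) (ρ : G →* ℂ) : Matrix X.V X.V ℂ :=
  Matrix.of fun u v =>
    (∑ e ∈ Finset.univ.filter
        (fun e => X.root (o.pick e) = u ∧ X.root (X.inv (o.pick e)) = v), ρ (η e)) +
    (∑ e ∈ Finset.univ.filter
        (fun e => X.root (o.pick e) = v ∧ X.root (X.inv (o.pick e)) = u),
          (starRingEnd ℂ) (ρ (η e)))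

/-- The `ρ`-twisted Laplacian `L_ρ = Q - A_ρ`. -/
noncomputable def twistedLapl {G : Type} [Group G] (X : SerreGraph) (o : X.Orientation)
    (η : X.Edge → G) (ρ : G →* ℂ) : Matrix X.V X.V ℂ :=
  X.qMatrix - X.twistedAdj o η ρ

/-- The reciprocal `ζ_M(s, x_e, X)⁻¹ = det(I - W)` of the metric zeta function, where `W`
is the edge matrix with entries `s^{x_e}` (two-term determinant formula). -/
noncomputable def zetaMInv (X : SerreGraph) (x : X.Edge → ℝ) (s : ℝ) : ℝ :=
  Matrix.det ((1 : Matrix X.H X.H ℝ) - Matrix.of fun a b : X.H =>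
    if X.root (X.inv a) = X.root b ∧ b ≠ X.inv a then s ^ (x (X.edgeOf a)) else 0)

/-- The reciprocal of the Ihara zeta function: the metric zeta with all lengths one. -/
noncomputable def zetaInv (X : SerreGraph) (s : ℝ) : ℝ :=
  X.zetaMInv (fun _ => 1) s

/-- The reciprocal `L_M(s, x_e, X̃/X, ρ)⁻¹ = det(I - W_ρ)` of the metric Artin `L`-function
of the cover defined by the voltage assignment `η` (two-term determinant formula). -/
noncomputable def LMInv {G : Type} [Group G] (X : SerreGraph) (o : X.Orientation)
    (η : X.Edge → G) (ρ : G →* ℂ) (x : X.Edge → ℝ) (s : ℝ) : ℂ :=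
  Matrix.det ((1 : Matrix X.H X.H ℂ) - Matrix.of fun a b : X.H =>
    if X.root (X.inv a) = X.root b ∧ b ≠ X.inv a then
      ρ (X.halfVoltage o η a) * ((s ^ (x (X.edgeOf a)) : ℝ) : ℂ)
    else 0)

/-- The weight polynomial of a free cover defined by the voltage assignment `η`, twisted by
`ρ`: the sum over all `(g-1)`-element edge sets `F` all of whose complementary components
have genus one of `∏ᵢ |1 - ρ(η(Xᵢ))|² ∏_{e ∈ F} x_e`. -/
noncomputable def freeWeightPoly {G : Type} [Group G] (X : SerreGraph)
    (o : X.Orientation) (η : X.Edge → G) (ρ : G →* ℂ) : MvPolynomial X.Edge ℝ :=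
  ∑ F ∈ (Set.toFinite {F : Finset X.Edge |
      F.card + Fintype.card X.V = Fintype.card X.Edge ∧
      ∀ C ∈ X.components F, (X.edgesIn F C).card = C.card}).toFinset,
    MvPolynomial.C (basisWeight X o η ρ F) * ∏ e ∈ F, MvPolynomial.X e

/-- The `j`-th vertex on the chain subdividing the edge `e` into `n e` parts. -/
noncomputable def subVertex (X : SerreGraph) (o : X.Orientation) (n : X.Edge → ℕ)
    (e : X.Edge) (j : ℕ) : X.V ⊕ ((e : X.Edge) × Fin (n e - 1)) :=
  if _h0 : j = 0 then Sum.inl (X.root (o.pick e))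
  else if h : j < n e then Sum.inr ⟨e, ⟨j - 1, by omega⟩⟩
  else Sum.inl (X.root (X.inv (o.pick e)))

/-- The graph obtained from `X` by replacing each edge `e` by a chain of `n e` edges. -/
noncomputable def subdivide (X : SerreGraph) (o : X.Orientation) (n : X.Edge → ℕ) :
    SerreGraph where
  V := X.V ⊕ ((e : X.Edge) × Fin (n e - 1))
  H := (e : X.Edge) × (Fin (n e) × Bool)
  fintypeV := inferInstance
  fintypeH := inferInstance
  decEqV := Classical.decEq _
  decEqH := Classical.decEq _
  inv := fun p => ⟨p.1, (p.2.1, !p.2.2)⟩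
  inv_inv := by rintro ⟨e, i, b⟩; simp
  inv_ne := by rintro ⟨e, i, b⟩ hcon; simp at hcon
  root := fun p => X.subVertex o n p.1 (if p.2.2 then (p.2.1 : ℕ) + 1 else (p.2.1 : ℕ))

end SerreGraph

/-- The cycle graph with `k` vertices, every pair of cyclically adjacent vertices joined by
`M` parallel edges. -/
def cycleGraph (k M : ℕ) : SerreGraph where
  V := Fin k
  H := Fin k × Fin M × Bool
  fintypeV := inferInstance
  fintypeH := inferInstance
  decEqV := inferInstance
  decEqH := inferInstance
  inv := fun p => (p.1, p.2.1, !p.2.2)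
  inv_inv := by rintro ⟨i, j, b⟩; simp
  inv_ne := by rintro ⟨i, j, b⟩ hcon; simp at hcon
  root := fun p => if p.2.2 then finRotate k p.1 else p.1

/-! ### Determinants -/

/-- Multilinear expansion, over its rows, of the determinant of a sum of rank-one matrices; choices
of edges that are not injective give equal rows. -/
lemma det_sum_rankOne_expand {V E : Type*} [Fintype V] [DecidableEq V] [DecidableEq E]
    (B : V → E → ℂ) (B' : E → V → ℂ) (c : E → ℂ) (S : Finset E) :
    Matrix.det (Matrix.of fun v w => ∑ e ∈ S, c e * (B v e * B' e w)) =
      ∑ f ∈ (Fintype.piFinset fun _ : V => S) with Function.Injective f,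
        (∏ v, c (f v)) * ((∏ v, B v (f v)) * Matrix.det (Matrix.of fun v w => B' (f v) w)) := by
  have h1 : (Matrix.of fun v w => ∑ e ∈ S, c e * (B v e * B' e w)) =
      fun v => ∑ e ∈ S, (c e * B v e) • B' e := by
    funext v w
    simp [Finset.sum_apply, mul_assoc]
  have h2 := (Matrix.detRowAlternating (n := V) (R := ℂ)).toMultilinearMap.map_sum_finset
    (fun v e => (c e * B v e) • B' e) (fun _ => S)
  simp only [AlternatingMap.coe_multilinearMap] at h2
  rw [h1]
  refine Eq.trans h2 ?_
  rw [Finset.sum_filter]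
  refine Finset.sum_congr rfl fun f _ => ?_
  have h3 := (Matrix.detRowAlternating (n := V) (R := ℂ)).toMultilinearMap.map_smul_univ
    (fun v => c (f v) * B v (f v)) (fun v => B' (f v))
  simp only [AlternatingMap.coe_multilinearMap] at h3
  rw [h3, Finset.prod_mul_distrib, smul_eq_mul, mul_assoc]
  split_ifs with hf
  · rfl
  · rw [Function.Injective] at hf
    push Not at hf
    obtain ⟨i, j, hij, hne⟩ := hf
    have : Matrix.detRowAlternating (fun v => B' (f v)) = 0 :=
      Matrix.det_zero_of_row_eq hne (by simp [hij])
    rw [this]; simp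

/-- A weighted Cauchy–Binet formula, phrased for a sum of rank-one matrices. -/
lemma det_sum_rankOne {V E : Type*} [Fintype V] [DecidableEq V] [Fintype E] [DecidableEq E]
    (B : V → E → ℂ) (B' : E → V → ℂ) (c : E → ℂ) :
    Matrix.det (Matrix.of fun v w => ∑ e, c e * (B v e * B' e w)) =
      ∑ S ∈ Finset.powersetCard (Fintype.card V) Finset.univ,
        (∏ e ∈ S, c e) * Matrix.det (Matrix.of fun v w => ∑ e ∈ S, B v e * B' e w) := by
  rw [det_sum_rankOne_expand,
    ← Finset.sum_fiberwise_of_maps_to (t := Finset.powersetCard (Fintype.card V) Finset.univ)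
      (g := fun f => Finset.univ.image f)]
  · refine Finset.sum_congr rfl fun S hS => ?_
    have hSc : S.card = Fintype.card V := (Finset.mem_powersetCard.1 hS).2
    have h := det_sum_rankOne_expand B B' (fun _ => 1) S
    simp only [one_mul, Finset.prod_const_one] at h
    rw [h, Finset.mul_sum]
    have hset : ((Fintype.piFinset fun _ : V => (Finset.univ : Finset E)).filter
        (fun f => Function.Injective f)).filter (fun f => Finset.univ.image f = S) =
        (Fintype.piFinset fun _ : V => S).filter (fun f => Function.Injective f) := by
      ext f
      simp only [Finset.mem_filter, Fintype.mem_piFinset, Finset.mem_univ, implies_true, true_and]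
      constructor
      · rintro ⟨hf, rfl⟩
        exact ⟨fun a => Finset.mem_image_of_mem _ (Finset.mem_univ a), hf⟩
      · rintro ⟨hS, hf⟩
        refine ⟨hf, Finset.eq_of_subset_of_card_le ?_ ?_⟩
        · intro e he
          obtain ⟨a, -, rfl⟩ := Finset.mem_image.1 he
          exact hS a
        · rw [Finset.card_image_of_injective _ hf, hSc, Finset.card_univ]
    rw [hset]
    refine Finset.sum_congr rfl fun f hf => ?_
    obtain ⟨hfS, hf⟩ := Finset.mem_filter.1 hf
    have him : Finset.univ.image f = S := by
      refine Finset.eq_of_subset_of_card_le ?_ ?_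
      · intro e he
        obtain ⟨a, -, rfl⟩ := Finset.mem_image.1 he
        exact Fintype.mem_piFinset.1 hfS a
      · rw [Finset.card_image_of_injective _ hf, hSc, Finset.card_univ]
    rw [← him, Finset.prod_image (fun a _ b _ hab => hf hab)]
  · intro f hf
    have hf := (Finset.mem_filter.1 hf).2
    rw [Finset.mem_powersetCard]
    exact ⟨Finset.subset_univ _, by rw [Finset.card_image_of_injective _ hf, Finset.card_univ]⟩

/-- A matrix whose entries vanish between different classes of `b` is block diagonal. -/
lemma det_eq_prod_blocks {m α : Type*} [Fintype m] [DecidableEq m] [DecidableEq α]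
    (M : Matrix m m ℂ) (b : m → α) (h : ∀ i j, b i ≠ b j → M i j = 0) :
    M.det = ∏ a ∈ Finset.univ.image b, (M.toSquareBlock b a).det := by
  let _ : LinearOrder α := IsWellOrder.linearOrder WellOrderingRel
  have := Matrix.BlockTriangular.det (M := M) (b := b) (fun i j hij => h i j hij.ne')
  convert this

/-- A matrix that is triangular with respect to a rank function, and has no nonzero off-diagonal
entry between indices of equal rank, has the product of its diagonal as determinant. -/
lemma det_of_ranked {m : Type*} [Fintype m] [DecidableEq m]
    (N : Matrix m m ℂ) (d : m → ℕ) (h : ∀ i j, N i j ≠ 0 → i = j ∨ d i < d j) :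
    N.det = ∏ i, N i i := by
  rw [Matrix.det_apply, Finset.sum_eq_single 1]
  · simp
  · intro σ _ hσ
    by_contra hne
    have hall : ∀ i, N (σ i) i ≠ 0 := fun i hi =>
      hne (by rw [Finset.prod_eq_zero (f := fun j => N (σ j) j) (Finset.mem_univ i) hi, smul_zero])
    obtain ⟨i, hi⟩ : ∃ i, σ i ≠ i := by
      by_contra! hcon
      exact hσ (Equiv.ext hcon)
    have hlt : ∑ j, d (σ j) < ∑ j, d j := by
      refine Finset.sum_lt_sum (fun j _ => ?_) ⟨i, Finset.mem_univ i, ?_⟩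
      · rcases h _ _ (hall j) with hj | hj
        · rw [hj]
        · exact hj.le
      · exact (h _ _ (hall i)).resolve_left hi
    rw [Equiv.sum_comp σ d] at hlt
    exact lt_irrefl _ hlt
  · simp

/-- A Gram matrix of a matrix with fewer columns than rows is singular. -/
lemma det_gram_eq_zero {m n : Type*} [Fintype m] [DecidableEq m] [Fintype n]
    (A : Matrix m n ℂ) (h : Fintype.card n < Fintype.card m) :
    (A * A.conjTranspose).det = 0 := by
  by_contra hne
  have h1 := Matrix.rank_of_isUnit (A * A.conjTranspose)
    ((Matrix.isUnit_iff_isUnit_det _).2 (isUnit_iff_ne_zero.2 hne))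
  have h2 := (Matrix.rank_mul_le_left A A.conjTranspose).trans A.rank_le_card_width
  omega

/-- If `A` is square up to a bijection between columns and rows, its Gram determinant is the squared
absolute value of its determinant. -/
lemma det_gram_eq {m n : Type*} [Fintype m] [DecidableEq m] [Fintype n] [DecidableEq n]
    (A : Matrix m n ℂ) (φ : m ≃ n) :
    (A * A.conjTranspose).det = ((‖(A.submatrix id φ).det‖ ^ 2 : ℝ) : ℂ) := by
  have h : A * A.conjTranspose = A.submatrix id φ * (A.submatrix id φ).conjTranspose := by
    rw [Matrix.conjTranspose_submatrix, Matrix.submatrix_mul_equiv]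
    simp
  rw [h, Matrix.det_mul, Matrix.det_conjTranspose]
  push_cast
  exact Complex.mul_conj' _

/-- Cramer's rule: `z i * det M` is the determinant of `M` with column `i` replaced by `M z`. -/
lemma mul_det_eq_det_updateCol {m : Type*} [Fintype m] [DecidableEq m]
    (M : Matrix m m ℂ) (z : m → ℂ) (i : m) :
    z i * M.det = (M.updateCol i (M.mulVec z)).det := by
  rw [← Matrix.cramer_apply, Matrix.cramer_eq_adjugate_mulVec, Matrix.mulVec_mulVec,
    Matrix.adjugate_mul]
  simp [Matrix.smul_mulVec, mul_comm]

/-! ### Walks and the twisted incidence matrix -/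

/-- A rank function (the distance to `a`) that strictly decreases along a suitable step out of each
point from which `a` is reachable. -/
lemma exists_rank {V : Type*} (r : V → V → Prop) (a : V) :
    ∃ d : V → ℕ, ∀ v, Relation.ReflTransGen r v a → v ≠ a →
      ∃ w, r v w ∧ Relation.ReflTransGen r w a ∧ d w < d v := by
  classical
  let R : ℕ → V → Prop := fun n => n.rec (fun v => v = a) (fun _ P v => ∃ w, r v w ∧ P w)
  have hR : ∀ n v, R n v → Relation.ReflTransGen r v a := by
    intro n
    induction n with
    | zero =>
      intro v hv
      rw [show v = a from hv]
    | succ n ih => rintro v ⟨w, hvw, hw⟩; exact .head hvw (ih w hw)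
  have hex : ∀ v, Relation.ReflTransGen r v a → ∃ n, R n v := by
    intro v hv
    refine Relation.ReflTransGen.head_induction_on hv ⟨0, rfl⟩ ?_
    · intro _ _ h _ ih
      obtain ⟨n, hn⟩ := ih
      exact ⟨n + 1, _, h, hn⟩
  refine ⟨fun v => sInf {n | R n v}, fun v hv hne => ?_⟩
  have hmem : R (sInf {n | R n v}) v := Nat.sInf_mem (s := {n | R n v}) (hex v hv)
  cases hn : sInf {n | R n v} with
  | zero => rw [hn] at hmem; exact absurd hmem hne
  | succ n =>
    rw [hn] at hmem
    obtain ⟨w, hvw, hw⟩ := hmem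
    refine ⟨w, hvw, hR n w hw, ?_⟩
    have : sInf {n | R n w} ≤ n := Nat.sInf_le hw
    show sInf {n | R n w} < sInf {n | R n v}
    omega

namespace SerreGraph

lemma edgeOf_eq_iff (X : SerreGraph) (h h' : X.H) :
    X.edgeOf h = X.edgeOf h' ↔ h' = h ∨ h' = X.inv h := by
  constructor
  · intro heq
    let f : X.Edge → Set X.H := Quot.lift (fun h => {h, X.inv h}) (by
      rintro a b rfl
      rw [X.inv_inv, Set.pair_comm])
    have h1 : f (X.edgeOf h) = {h, X.inv h} := rfl
    have h2 : h' ∈ f (X.edgeOf h') := Or.inl rfl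
    rw [← heq, h1] at h2
    exact h2
  · rintro (rfl | rfl)
    · rfl
    · exact (X.edgeOf_inv h).symm

/-- Adjacency along an edge of `T`. -/
def edgeStep (X : SerreGraph) (T : Finset X.Edge) (u v : X.V) : Prop :=
  ∃ h : X.H, X.root h = u ∧ X.root (X.inv h) = v ∧ X.edgeOf h ∈ T

lemma edgeStep.symm {X : SerreGraph} {T : Finset X.Edge} {u v : X.V} (h : X.edgeStep T u v) :
    X.edgeStep T v u := by
  obtain ⟨k, rfl, rfl, hk⟩ := h
  exact ⟨X.inv k, rfl, by rw [X.inv_inv], by rwa [X.edgeOf_inv]⟩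

lemma reach_symm {X : SerreGraph} {T : Finset X.Edge} {u v : X.V}
    (h : Relation.ReflTransGen (X.edgeStep T) u v) :
    Relation.ReflTransGen (X.edgeStep T) v u := by
  induction h with
  | refl => exact .refl
  | tail _ hs ih => exact .head hs.symm ih

/-- A list of half-edges forms a walk from the first vertex to the second. -/
def IsWalk (X : SerreGraph) : X.V → List X.H → X.V → Prop
  | u, [], w => u = w
  | u, h :: l, w => X.root h = u ∧ X.IsWalk (X.root (X.inv h)) l w

lemma chain_iff_isWalk (X : SerreGraph) (l : List X.H) (h k : X.H) :
    List.IsChain (fun a b => X.root (X.inv a) = X.root b) (h :: (l ++ [k])) ↔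
      X.IsWalk (X.root (X.inv h)) l (X.root k) := by
  induction l generalizing h with
  | nil => simp [IsWalk]
  | cons a l ih =>
    simp only [List.cons_append, List.isChain_cons_cons, IsWalk]
    rw [ih a, eq_comm]

lemma isClosedPath_cons_iff (X : SerreGraph) (h : X.H) (l : List X.H) :
    X.IsClosedPath (h :: l) ↔ X.IsWalk (X.root h) (h :: l) (X.root h) := by
  have := chain_iff_isWalk X l h h
  simp only [IsWalk, true_and]
  rw [← this]
  exact ⟨fun hc => hc.2, fun hc => ⟨List.cons_ne_nil _ _, hc⟩⟩

/-- Reachability is witnessed by a walk without repeated edges: follow the rank function. -/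
lemma exists_walk_nodup (X : SerreGraph) (T : Finset X.Edge) {v a : X.V}
    (hva : Relation.ReflTransGen (X.edgeStep T) v a) :
    ∃ l, X.IsWalk v l a ∧ (∀ h ∈ l, X.edgeOf h ∈ T) ∧ (l.map X.edgeOf).Nodup := by
  obtain ⟨d, hd⟩ := exists_rank (X.edgeStep T) a
  suffices H : ∀ n v, d v = n → Relation.ReflTransGen (X.edgeStep T) v a →
      ∃ l, X.IsWalk v l a ∧ (∀ h ∈ l, X.edgeOf h ∈ T ∧ d (X.root h) ≤ n ∧
        d (X.root (X.inv h)) ≤ n) ∧ (l.map X.edgeOf).Nodup by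
    obtain ⟨l, h1, h2, h3⟩ := H _ v rfl hva
    exact ⟨l, h1, fun h hh => (h2 h hh).1, h3⟩
  intro n
  induction n using Nat.strong_induction_on with
  | _ n ih =>
  intro v hv hva
  by_cases hne : v = a
  · exact ⟨[], hne, by simp, by simp⟩
  obtain ⟨w, ⟨h, hhv, hhw, hT⟩, hwa, hlt⟩ := hd v hva hne
  obtain ⟨l, hl1, hl2, hl3⟩ := ih (d w) (by omega) w rfl hwa
  refine ⟨h :: l, ⟨hhv, by rwa [hhw]⟩, ?_, ?_⟩
  · intro k hk
    rcases List.mem_cons.1 hk with rfl | hk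
    · rw [hhv, hhw]; exact ⟨hT, by omega, by omega⟩
    · have := hl2 k hk
      exact ⟨this.1, by omega, by omega⟩
  · rw [List.map_cons, List.nodup_cons]
    refine ⟨?_, hl3⟩
    intro hmem
    obtain ⟨k, hk, hke⟩ := List.mem_map.1 hmem
    have := hl2 k hk
    rcases (X.edgeOf_eq_iff k h).1 hke with rfl | rfl
    · rw [hhv] at this; omega
    · rw [hhv] at this; omega

lemma walk_reach (X : SerreGraph) (T : Finset X.Edge) {l : List X.H} {u w : X.V}
    (hl : X.IsWalk u l w) (hT : ∀ h ∈ l, X.edgeOf h ∈ T) :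
    Relation.ReflTransGen (X.edgeStep T) u w := by
  induction l generalizing u with
  | nil => obtain rfl := hl; exact .refl
  | cons h l ih =>
    exact .head ⟨h, hl.1, rfl, hT h (by simp)⟩ (ih hl.2 fun k hk => hT k (by simp [hk]))

section
variable {G : Type} [Group G] (X : SerreGraph) (o : X.Orientation) (η : X.Edge → G) (ρ : G →* ℂ)

/-- The twisted incidence vector of a half-edge: `1` at its root, minus the conjugate of the
character value of its voltage at its end. -/
noncomputable def halfIncid (h : X.H) (v : X.V) : ℂ :=
  (if X.root h = v then 1 else 0) -
    (starRingEnd ℂ) (ρ (X.halfVoltage o η h)) * (if X.root (X.inv h) = v then 1 else 0)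

/-- The twisted incidence matrix, in which every edge is read along its orientation. -/
noncomputable def incid (v : X.V) (e : X.Edge) : ℂ := X.halfIncid o η ρ (o.pick e) v

lemma halfVoltage_inv (h : X.H) :
    X.halfVoltage o η (X.inv h) = (X.halfVoltage o η h)⁻¹ := by
  have hp := (X.edgeOf_eq_iff h (o.pick (X.edgeOf h))).1 (o.pick_spec _).symm
  unfold halfVoltage
  rw [X.edgeOf_inv]
  rcases hp with hp | hp
  · rw [hp, if_neg (X.inv_ne h), if_pos rfl]
  · rw [hp, if_pos rfl, if_neg (fun hc => X.inv_ne h hc.symm), _root_.inv_inv]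

variable [Finite G]

lemma norm_char (g : G) : ‖ρ g‖ = 1 :=
  (MonoidHom.isOfFinOrder ρ (isOfFinOrder_of_finite g)).norm_eq_one

lemma char_mul_conj (g : G) : ρ g * (starRingEnd ℂ) (ρ g) = 1 := by
  rw [Complex.mul_conj', norm_char]; simp

lemma char_inv (g : G) : ρ g⁻¹ = (starRingEnd ℂ) (ρ g) := by
  have h1 : ρ g⁻¹ * ρ g = 1 := by rw [← map_mul]; simp
  calc ρ g⁻¹ = ρ g⁻¹ * (ρ g * (starRingEnd ℂ) (ρ g)) := by rw [char_mul_conj, mul_one]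
    _ = _ := by rw [← mul_assoc, h1, one_mul]

/-- Reversing a half-edge multiplies its incidence vector by a complex number of modulus one. -/
lemma exists_halfIncid_eq (h : X.H) :
    ∃ ε : ℂ, ‖ε‖ = 1 ∧ ∀ v, X.halfIncid o η ρ h v = ε * X.incid o η ρ v (X.edgeOf h) := by
  rcases (X.edgeOf_eq_iff h (o.pick (X.edgeOf h))).1 (o.pick_spec _).symm with hp | hp
  · exact ⟨1, by simp, fun v => by simp [incid, hp]⟩
  · refine ⟨-(starRingEnd ℂ) (ρ (X.halfVoltage o η h)), ?_, fun v => ?_⟩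
    · rw [norm_neg, RCLike.norm_conj, norm_char]
    · rw [incid, hp, halfIncid, halfIncid, X.inv_inv, halfVoltage_inv, char_inv,
        Complex.conj_conj]
      have := char_mul_conj ρ (X.halfVoltage o η h)
      linear_combination (-1 : ℂ) * (if X.root h = v then 1 else 0) * this

/-- A signed combination of the incidence vectors along a trail telescopes to the difference of its
end points, twisted by the voltage of the trail. -/
lemma exists_trail_coeff {l : List X.H} {u w : X.V} (hl : X.IsWalk u l w)
    (hnd : (l.map X.edgeOf).Nodup) :
    ∃ z : X.Edge → ℂ, (∀ e, z e ≠ 0 → e ∈ l.map X.edgeOf) ∧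
      (∀ v, ∑ e, X.incid o η ρ v e * z e = (if u = v then 1 else 0) -
        (starRingEnd ℂ) (ρ (X.pathVoltage o η l)) * (if w = v then 1 else 0)) ∧
      ∀ h l', l = h :: l' → ‖z (X.edgeOf h)‖ = 1 := by
  induction l generalizing u with
  | nil =>
    obtain rfl := hl
    exact ⟨0, by simp, by simp [pathVoltage], by simp⟩
  | cons h l ih =>
    obtain ⟨rfl, hl⟩ := hl
    rw [List.map_cons, List.nodup_cons] at hnd
    obtain ⟨z, hz1, hz2, -⟩ := ih hl hnd.2
    obtain ⟨ε, hε, hεv⟩ := X.exists_halfIncid_eq o η ρ h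
    have hz0 : z (X.edgeOf h) = 0 := by
      by_contra hne
      exact hnd.1 (hz1 _ hne)
    refine ⟨fun e => (if e = X.edgeOf h then ε else 0) +
      (starRingEnd ℂ) (ρ (X.halfVoltage o η h)) * z e, ?_, ?_, ?_⟩
    · intro e he
      rw [List.map_cons, List.mem_cons]
      by_cases heq : e = X.edgeOf h
      · exact Or.inl heq
      · right
        refine hz1 e fun h0 => he ?_
        simp [heq, h0]
    · intro v
      have h1 : ∑ e, X.incid o η ρ v e * ((if e = X.edgeOf h then ε else 0) +
          (starRingEnd ℂ) (ρ (X.halfVoltage o η h)) * z e) =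
          ε * X.incid o η ρ v (X.edgeOf h) +
          (starRingEnd ℂ) (ρ (X.halfVoltage o η h)) * ∑ e, X.incid o η ρ v e * z e := by
        simp only [mul_add, Finset.sum_add_distrib, mul_ite, mul_zero, Finset.sum_ite_eq',
          Finset.mem_univ, if_true, Finset.mul_sum]
        congr 1
        · ring
        · exact Finset.sum_congr rfl fun e _ => by ring
      rw [h1, hz2, ← hεv, halfIncid]
      have : X.pathVoltage o η (h :: l) = X.halfVoltage o η h * X.pathVoltage o η l := by
        simp [pathVoltage]
      rw [this, map_mul, map_mul]
      ring
    · rintro k l' heq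
      obtain ⟨rfl, rfl⟩ := List.cons.inj heq
      simp [hz0, hε]
end
end SerreGraph

/-! ### Unicyclic edge sets -/

namespace SerreGraph

/-- In a connected edge set, every vertex other than a chosen target has an outgoing half-edge
along which a suitable rank function decreases. -/
lemma exists_parent (X : SerreGraph) [Nonempty X.H] (T : Finset X.Edge) (p : X.V → Prop)
    (v₀ : X.V) (hc : ∀ u, p u → Relation.ReflTransGen (X.edgeStep T) u v₀) :
    ∃ (d : X.V → ℕ) (ph : X.V → X.H), ∀ v, p v → v ≠ v₀ →
      X.root (ph v) = v ∧ X.edgeOf (ph v) ∈ T ∧ d (X.root (X.inv (ph v))) < d v := by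
  obtain ⟨d, hd⟩ := exists_rank (X.edgeStep T) v₀
  have : ∀ v, p v → v ≠ v₀ → ∃ h : X.H,
      X.root h = v ∧ X.edgeOf h ∈ T ∧ d (X.root (X.inv h)) < d v := by
    intro v hv hne
    obtain ⟨w, ⟨h, h1, h2, h3⟩, -, hlt⟩ := hd v (hc v hv) hne
    exact ⟨h, h1, h3, by rwa [h2]⟩
  choose! ph hph using this
  exact ⟨d, ph, hph⟩

/-- The parent edges of distinct vertices are distinct, since rank decreases towards the parent. -/
lemma parent_inj (X : SerreGraph) {d : X.V → ℕ} {ph : X.V → X.H} {v w : X.V}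
    (hv1 : X.root (ph v) = v) (hv2 : d (X.root (X.inv (ph v))) < d v)
    (hw1 : X.root (ph w) = w) (hw2 : d (X.root (X.inv (ph w))) < d w)
    (h : X.edgeOf (ph v) = X.edgeOf (ph w)) : v = w := by
  rcases (X.edgeOf_eq_iff _ _).1 h with h | h
  · rw [← hv1, ← hw1, h]
  · rw [h, X.inv_inv, hv1] at hw2
    rw [← h, hw1] at hv2
    omega

section
variable (X : SerreGraph) (T : Finset X.Edge) (p : X.V → Prop) [DecidablePred p]

/-- A connected edge set with as many edges as vertices contains a cycle. -/
lemma exists_edgeCycle (hne : ∃ v, p v)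
    (hconn : ∀ u v, p u → p v → Relation.ReflTransGen (X.edgeStep T) u v)
    (hT : ∀ h, X.edgeOf h ∈ T → p (X.root h))
    (hcard : T.card = Fintype.card {v // p v}) :
    ∃ l, X.IsEdgeCycle T l := by
  obtain ⟨v₀, hv₀⟩ := hne
  have hpos : 0 < T.card := by rw [hcard]; exact Fintype.card_pos_iff.2 ⟨⟨v₀, hv₀⟩⟩
  obtain ⟨e₀, he₀⟩ := Finset.card_pos.1 hpos
  have : Nonempty X.H := ⟨(X.edgeOf_surjective e₀).choose⟩
  obtain ⟨d, ph, hph⟩ := X.exists_parent T p v₀ (fun u hu => hconn u v₀ hu hv₀)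
  -- The parent edges of the vertices other than `v₀` are too few to exhaust `T`.
  obtain ⟨e, heT, he⟩ : ∃ e ∈ T, e ∉ ((Finset.univ.filter p).erase v₀).image
      (fun v => X.edgeOf (ph v)) := by
    refine Finset.exists_mem_notMem_of_card_lt_card ?_
    refine Finset.card_image_le.trans_lt ?_
    rw [hcard, Fintype.card_subtype]
    exact Finset.card_erase_lt_of_mem (by simp [hv₀])
  have hreach : ∀ n v, d v = n → p v →
      Relation.ReflTransGen (X.edgeStep (T.erase e)) v v₀ := by
    intro n
    induction n using Nat.strong_induction_on with
    | _ n ih =>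
    intro v hdv hv
    by_cases hvv : v = v₀
    · rw [hvv]
    obtain ⟨h1, h2, h3⟩ := hph v hv hvv
    refine .head ⟨ph v, h1, rfl, ?_⟩ (ih _ (hdv ▸ h3) _ rfl ?_)
    · refine Finset.mem_erase.2 ⟨fun hcon => he ?_, h2⟩
      exact Finset.mem_image.2 ⟨v, by simp [hv, hvv], hcon⟩
    · exact hT _ (by rwa [X.edgeOf_inv])
  obtain ⟨h, rfl⟩ := X.edgeOf_surjective e
  have ha := hreach _ _ rfl (hT h heT)
  have hb := hreach _ _ rfl (hT (X.inv h) (by rwa [X.edgeOf_inv]))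
  obtain ⟨l, hl1, hl2, hl3⟩ := X.exists_walk_nodup _ (hb.trans (reach_symm ha))
  refine ⟨h :: l, (X.isClosedPath_cons_iff h l).2 ⟨rfl, hl1⟩, ?_, ?_⟩
  · intro k hk
    rcases List.mem_cons.1 hk with rfl | hk
    · exact heT
    · exact Finset.mem_of_mem_erase (hl2 k hk)
  · rw [List.map_cons, List.nodup_cons]
    refine ⟨fun hmem => ?_, hl3⟩
    obtain ⟨k, hk, hke⟩ := List.mem_map.1 hmem
    exact (Finset.mem_erase.1 (hl2 k hk)).1 hke

variable {G : Type} [Group G] (o : X.Orientation) (η : X.Edge → G) (ρ : G →* ℂ)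

lemma norm_halfIncid_root {h : X.H} (hne : X.root (X.inv h) ≠ X.root h) :
    ‖X.halfIncid o η ρ h (X.root h)‖ = 1 := by
  simp [halfIncid, hne]

lemma halfIncid_ne_zero {h : X.H} {v : X.V} (hne : X.halfIncid o η ρ h v ≠ 0) :
    v = X.root h ∨ v = X.root (X.inv h) := by
  by_contra! hcon
  exact hne (by simp [halfIncid, hcon.1.symm, hcon.2.symm])

variable [Finite G]

lemma norm_incid (h : X.H) (v : X.V) :
    ‖X.incid o η ρ v (X.edgeOf h)‖ = ‖X.halfIncid o η ρ h v‖ := by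
  obtain ⟨ε, hε, hv⟩ := X.exists_halfIncid_eq o η ρ h
  rw [hv, norm_mul, hε, one_mul]

/-- The twisted Laplacian of a connected unicyclic edge set has determinant `|1 - ρ(η(P))|²`,
where `P` is its cycle. -/
lemma det_gram_of_edgeCycle
    (hconn : ∀ u v, p u → p v → Relation.ReflTransGen (X.edgeStep T) u v)
    (hT : ∀ h, X.edgeOf h ∈ T → p (X.root h))
    (hcard : T.card = Fintype.card {v // p v}) {l : List X.H} (hl : X.IsEdgeCycle T l) :
    Matrix.det (Matrix.of fun v w : {v // p v} =>
      ∑ e ∈ T, X.incid o η ρ v e * (starRingEnd ℂ) (X.incid o η ρ w e)) =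
      ((‖(1 : ℂ) - ρ (X.pathVoltage o η l)‖ ^ 2 : ℝ) : ℂ) := by
  classical
  obtain ⟨hcl, hlT, hnd⟩ := hl
  obtain ⟨h₁, l', rfl⟩ := List.exists_cons_of_ne_nil hcl.1
  have hw := (X.isClosedPath_cons_iff h₁ l').1 hcl
  have : Nonempty X.H := ⟨h₁⟩
  have h₁T : X.edgeOf h₁ ∈ T := hlT h₁ (by simp)
  set v₀ := X.root h₁ with hv₀
  have hpv₀ : p v₀ := hT h₁ h₁T
  set T' := T.erase (X.edgeOf h₁) with hT'
  -- The rest of the cycle keeps the edge set connected after removal of the first edge.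
  have hend : Relation.ReflTransGen (X.edgeStep T') (X.root (X.inv h₁)) v₀ := by
    refine X.walk_reach T' hw.2 fun k hk => Finset.mem_erase.2 ⟨fun hcon => ?_, hlT k (by simp [hk])⟩
    rw [List.map_cons, List.nodup_cons] at hnd
    exact hnd.1 (List.mem_map.2 ⟨k, hk, hcon⟩)
  have hreach : ∀ u, p u → Relation.ReflTransGen (X.edgeStep T') u v₀ := by
    intro u hu
    refine Relation.ReflTransGen.head_induction_on (hconn u v₀ hu hpv₀) .refl ?_
    rintro _ _ ⟨h, rfl, rfl, hh⟩ _ ih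
    by_cases heq : X.edgeOf h = X.edgeOf h₁
    · rcases (X.edgeOf_eq_iff _ _).1 heq with h' | h'
      · rw [← h']
      · rw [h', X.inv_inv] at hend
        exact hend
    · exact .head ⟨h, rfl, rfl, Finset.mem_erase.2 ⟨heq, hh⟩⟩ ih
  obtain ⟨d, ph, hph⟩ := X.exists_parent T' p v₀ hreach
  let φ₀ : {v // p v} → {e // e ∈ T} := fun v => if hv : (v : X.V) = v₀ then ⟨X.edgeOf h₁, h₁T⟩
    else ⟨X.edgeOf (ph v), Finset.mem_of_mem_erase (hph v v.2 hv).2.1⟩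
  have hφ1 : ∀ v : {v // p v}, (v : X.V) = v₀ → (φ₀ v : X.Edge) = X.edgeOf h₁ :=
    fun v hv => by simp [φ₀, hv]
  have hφ2 : ∀ v : {v // p v}, (v : X.V) ≠ v₀ → (φ₀ v : X.Edge) = X.edgeOf (ph v) :=
    fun v hv => by simp [φ₀, hv]
  have hinj : Function.Injective φ₀ := by
    intro v w hvw
    have hvw' : (φ₀ v : X.Edge) = φ₀ w := by rw [hvw]
    by_cases hv : (v : X.V) = v₀ <;> by_cases hw : (w : X.V) = v₀
    · exact Subtype.ext (hv.trans hw.symm)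
    · rw [hφ1 v hv, hφ2 w hw] at hvw'
      exact absurd hvw'.symm (Finset.mem_erase.1 (hph w w.2 hw).2.1).1
    · rw [hφ2 v hv, hφ1 w hw] at hvw'
      exact absurd hvw' (Finset.mem_erase.1 (hph v v.2 hv).2.1).1
    · rw [hφ2 v hv, hφ2 w hw] at hvw'
      obtain ⟨a1, -, a2⟩ := hph v v.2 hv
      obtain ⟨b1, -, b2⟩ := hph w w.2 hw
      exact Subtype.ext (X.parent_inj a1 a2 b1 b2 hvw')
  have hbij : Function.Bijective φ₀ :=
    (Fintype.bijective_iff_injective_and_card _).2 ⟨hinj, by simp [hcard]⟩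
  let φ : {v // p v} ≃ {e // e ∈ T} := Equiv.ofBijective φ₀ hbij
  let A : Matrix {v // p v} {e // e ∈ T} ℂ := Matrix.of fun v e => X.incid o η ρ v e
  have hA : (Matrix.of fun v w : {v // p v} =>
      ∑ e ∈ T, X.incid o η ρ v e * (starRingEnd ℂ) (X.incid o η ρ w e)) =
      A * A.conjTranspose := by
    ext v w
    simp only [Matrix.of_apply, Matrix.mul_apply, Matrix.conjTranspose_apply, A]
    exact (Finset.sum_coe_sort T
      (fun e => X.incid o η ρ v e * (starRingEnd ℂ) (X.incid o η ρ w e))).symm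
  rw [hA, det_gram_eq A φ]
  congr 2
  set M := A.submatrix id φ with hM
  let i₀ : {v // p v} := ⟨v₀, hpv₀⟩
  obtain ⟨z, hz1, hz2, hz3⟩ := X.exists_trail_coeff o η ρ hw hnd
  set κ := 1 - (starRingEnd ℂ) (ρ (X.pathVoltage o η (h₁ :: l'))) with hκ
  have hMz : M.mulVec (fun v => z (φ v)) = κ • Pi.single i₀ 1 := by
    funext v
    simp only [Matrix.mulVec, dotProduct, hM, Matrix.submatrix_apply, id]
    rw [Equiv.sum_comp φ (fun e => A v e * z e)]
    have h1 : ∑ e : {e // e ∈ T}, A v e * z e = ∑ e, X.incid o η ρ v e * z e := by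
      refine (Finset.sum_coe_sort T (fun e => X.incid o η ρ v e * z e)).trans ?_
      refine Finset.sum_subset (Finset.subset_univ T) fun e _ he => ?_
      have : z e = 0 := by
        by_contra hne
        obtain ⟨k, hk, rfl⟩ := List.mem_map.1 (hz1 e hne)
        exact he (hlT k hk)
      rw [this, mul_zero]
    rw [h1, hz2, Pi.smul_apply, Pi.single_apply, hκ]
    have : v = i₀ ↔ v₀ = v := by
      rw [Subtype.ext_iff, eq_comm]
    simp only [this, smul_eq_mul]
    ring
  have hcr := mul_det_eq_det_updateCol M (fun v => z (φ v)) i₀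
  rw [hMz, Matrix.det_updateCol_smul] at hcr
  have hdet : ‖(M.updateCol i₀ (Pi.single i₀ 1)).det‖ = 1 := by
    have hent : ∀ v w : {v // p v}, w ≠ i₀ →
        ‖(M.updateCol i₀ (Pi.single i₀ 1)) v w‖ = ‖X.halfIncid o η ρ (ph w) v‖ := by
      intro v w hw
      have hw' : (w : X.V) ≠ v₀ := fun hcon => hw (Subtype.ext hcon)
      rw [Matrix.updateCol_ne hw, ← norm_incid, ← hφ2 w hw']
      rfl
    rw [det_of_ranked _ (fun v : {v // p v} => d v), norm_prod]
    · refine Finset.prod_eq_one fun v _ => ?_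
      by_cases hv : v = i₀
      · simp [hv]
      · have hv' : (v : X.V) ≠ v₀ := fun hcon => hv (Subtype.ext hcon)
        obtain ⟨a1, -, a2⟩ := hph v v.2 hv'
        rw [hent v v hv]
        have := X.norm_halfIncid_root o η ρ (h := ph v) (fun hcon => by
          rw [hcon, a1] at a2; exact lt_irrefl _ a2)
        rwa [a1] at this
    · intro v w hvw
      by_cases hw : w = i₀
      · left
        by_contra hne
        rw [hw] at hvw hne
        simp [hne] at hvw
      · have hw' : (w : X.V) ≠ v₀ := fun hcon => hw (Subtype.ext hcon)
        obtain ⟨a1, -, a2⟩ := hph w w.2 hw'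
        rw [← norm_ne_zero_iff, hent v w hw, norm_ne_zero_iff] at hvw
        rcases X.halfIncid_ne_zero o η ρ hvw with h | h
        · left; exact Subtype.ext (h.trans a1)
        · right; rw [h]; exact a2
  have hz : ‖z (φ i₀)‖ = 1 := by
    have : (φ i₀ : X.Edge) = X.edgeOf h₁ := hφ1 i₀ rfl
    rw [this]
    exact hz3 h₁ l' rfl
  have hn := congrArg norm hcr
  rw [norm_mul, norm_mul, hz, hdet, one_mul, mul_one] at hn
  rw [hn, hκ, ← RCLike.norm_conj, map_sub, map_one, Complex.conj_conj]
end
end SerreGraph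

/-! ### Connected components and the twisted matrix-tree theorem -/

namespace SerreGraph
section
variable (X : SerreGraph) (F : Finset X.Edge)

lemma adjStep_iff (u v : X.V) : X.adjStep F u v ↔ X.edgeStep Fᶜ u v := by
  simp [adjStep, edgeStep]

lemma compRel_iff (u v : X.V) :
    X.compRel F u v ↔ Relation.ReflTransGen (X.edgeStep Fᶜ) u v := by
  have : X.adjStep F = X.edgeStep Fᶜ := by
    funext u v
    exact propext (X.adjStep_iff F u v)
  rw [compRel, this]

lemma compRel_symm {u v : X.V} (h : X.compRel F u v) : X.compRel F v u := by
  rw [compRel_iff] at h ⊢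
  exact reach_symm h

lemma mem_compVerts (u v : X.V) : v ∈ X.compVerts F u ↔ X.compRel F u v := by
  simp [compVerts]

lemma compVerts_eq_iff (u v : X.V) : X.compVerts F u = X.compVerts F v ↔ X.compRel F u v := by
  constructor
  · intro h
    rw [← mem_compVerts, h, mem_compVerts]
    exact .refl
  · intro h
    ext w
    rw [mem_compVerts, mem_compVerts]
    exact ⟨fun hw => (X.compRel_symm F h).trans hw, fun hw => h.trans hw⟩

lemma compVerts_inv {h : X.H} (hh : X.edgeOf h ∉ F) :
    X.compVerts F (X.root h) = X.compVerts F (X.root (X.inv h)) :=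
  (X.compVerts_eq_iff F _ _).2 (.single ⟨h, rfl, rfl, hh⟩)

lemma mem_compVerts_iff_eq (u v : X.V) :
    v ∈ X.compVerts F u ↔ X.compVerts F v = X.compVerts F u := by
  rw [mem_compVerts, ← compVerts_eq_iff, eq_comm]

lemma edgeOf_mem_edgesIn (u : X.V) (h : X.H) :
    X.edgeOf h ∈ X.edgesIn F (X.compVerts F u) ↔
      X.edgeOf h ∉ F ∧ X.compVerts F (X.root h) = X.compVerts F u := by
  simp only [edgesIn, Set.Finite.mem_toFinset, Set.mem_ofPred_eq]
  refine and_congr_right fun hF => ?_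
  simp only [mem_compVerts_iff_eq]
  constructor
  · rintro ⟨k, hk, hku⟩
    rcases (X.edgeOf_eq_iff _ _).1 hk with rfl | rfl
    · exact hku
    · rw [← hku]
      rw [X.edgeOf_inv] at hF
      exact (X.compVerts_inv F (by rwa [← X.edgeOf_inv] at hF ⊢)).symm
  · exact fun hu => ⟨h, rfl, hu⟩

lemma edgesIn_conn (u v w : X.V) (hv : X.compVerts F v = X.compVerts F u)
    (hw : X.compVerts F w = X.compVerts F u) :
    Relation.ReflTransGen (X.edgeStep (X.edgesIn F (X.compVerts F u))) v w := by
  have hvw : X.compRel F v w := (X.compVerts_eq_iff F v w).1 (hv.trans hw.symm)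
  refine Relation.ReflTransGen.head_induction_on (motive := fun a _ =>
    X.compVerts F a = X.compVerts F u →
      Relation.ReflTransGen (X.edgeStep (X.edgesIn F (X.compVerts F u))) a w) hvw
      (fun _ => .refl) ?_ hv
  rintro _ _ ⟨h, rfl, rfl, hF⟩ _ ih ha
  exact .head ⟨h, rfl, rfl, (X.edgeOf_mem_edgesIn F u h).2 ⟨hF, ha⟩⟩
    (ih ((X.compVerts_inv F hF).symm.trans ha))

lemma sum_card_components : ∑ C ∈ X.components F, C.card = Fintype.card X.V := by
  rw [← Finset.card_univ, Finset.card_eq_sum_card_image (X.compVerts F)]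
  refine Finset.sum_congr rfl fun C hC => ?_
  obtain ⟨u, -, rfl⟩ := Finset.mem_image.1 hC
  congr 1
  ext v
  simp [mem_compVerts_iff_eq]

lemma sum_card_edgesIn (o : X.Orientation) :
    ∑ C ∈ X.components F, (X.edgesIn F C).card = Fᶜ.card := by
  rw [Finset.card_eq_sum_card_fiberwise (s := Fᶜ) (t := X.components F)
    (f := fun e => X.compVerts F (X.root (o.pick e)))]
  · refine Finset.sum_congr rfl fun C hC => ?_
    obtain ⟨u, -, rfl⟩ := Finset.mem_image.1 hC
    congr 1
    ext e
    have := X.edgeOf_mem_edgesIn F u (o.pick e)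
    rw [o.pick_spec] at this
    rw [this, Finset.mem_filter, Finset.mem_compl]
  · intro e _
    exact Finset.mem_image_of_mem _ (Finset.mem_univ _)

variable {G : Type} [Group G] (o : X.Orientation) (η : X.Edge → G) (ρ : G →* ℂ)

lemma cycleWeight_eq {T : Finset X.Edge} (hc : ∃ l, X.IsEdgeCycle T l) :
    ∃ l, X.IsEdgeCycle T l ∧
      cycleWeight X o η ρ T = ‖(1 : ℂ) - ρ (X.pathVoltage o η l)‖ ^ 2 :=
  ⟨hc.choose, hc.choose_spec, by rw [cycleWeight, dif_pos hc]⟩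

lemma incid_comp {e : X.Edge} {v : X.V} (he : e ∉ F) (hne : X.incid o η ρ v e ≠ 0) :
    X.compVerts F v = X.compVerts F (X.root (o.pick e)) := by
  rcases X.halfIncid_ne_zero o η ρ hne with rfl | rfl
  · rfl
  · exact (X.compVerts_inv F (by rwa [o.pick_spec])).symm

/-- The twisted Laplacian of a spanning edge set factors over the connected components. -/
lemma det_gram_eq_prod_components :
    Matrix.det (Matrix.of fun v w : X.V =>
      ∑ e ∈ Fᶜ, X.incid o η ρ v e * (starRingEnd ℂ) (X.incid o η ρ w e)) =
    ∏ C ∈ X.components F, Matrix.det (Matrix.of fun v w : {v // X.compVerts F v = C} =>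
      ∑ e ∈ X.edgesIn F C, X.incid o η ρ v e * (starRingEnd ℂ) (X.incid o η ρ w e)) := by
  rw [det_eq_prod_blocks _ (X.compVerts F)]
  · refine Finset.prod_congr rfl fun C hC => ?_
    obtain ⟨u, -, rfl⟩ := Finset.mem_image.1 hC
    congr 1
    ext v w
    simp only [Matrix.toSquareBlock_def, Matrix.of_apply]
    refine (Finset.sum_subset ?_ ?_).symm
    · intro e he
      rw [← o.pick_spec e] at he
      have := ((X.edgeOf_mem_edgesIn F u _).1 he).1
      rwa [o.pick_spec, ← Finset.mem_compl] at this
    · intro e he he'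
      rw [Finset.mem_compl] at he
      by_cases hv : X.incid o η ρ v e = 0
      · rw [hv, zero_mul]
      · refine absurd ?_ he'
        rw [← o.pick_spec e, edgeOf_mem_edgesIn, o.pick_spec]
        exact ⟨he, (X.incid_comp F o η ρ he hv).symm.trans v.2⟩
  · intro v w hvw
    refine Finset.sum_eq_zero fun e he => ?_
    rw [Finset.mem_compl] at he
    by_contra hne
    obtain ⟨h1, h2⟩ := mul_ne_zero_iff.1 hne
    rw [map_ne_zero] at h2
    exact hvw ((X.incid_comp F o η ρ he h1).trans (X.incid_comp F o η ρ he h2).symm)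

lemma card_fiber (u : X.V) :
    Fintype.card {v // X.compVerts F v = X.compVerts F u} = (X.compVerts F u).card := by
  rw [Fintype.card_subtype]
  congr 1
  ext v
  simp [mem_compVerts_iff_eq]

variable [Finite G]

/-- For an edge set `F` with `|V|` complementary edges, the determinant of the twisted Laplacian
of the complement is the weight of `F`. -/
lemma det_gram_compl (hF : Fᶜ.card = Fintype.card X.V) :
    Matrix.det (Matrix.of fun v w : X.V =>
      ∑ e ∈ Fᶜ, X.incid o η ρ v e * (starRingEnd ℂ) (X.incid o η ρ w e)) =
    open Classical in
    if ∀ C ∈ X.components F, (X.edgesIn F C).card = C.card then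
      ((basisWeight X o η ρ F : ℝ) : ℂ) else 0 := by
  rw [det_gram_eq_prod_components]
  split_ifs with hbal
  · rw [basisWeight, Complex.ofReal_prod]
    refine Finset.prod_congr rfl fun C hC => ?_
    have hb := hbal C hC
    obtain ⟨u, -, rfl⟩ := Finset.mem_image.1 hC
    have hconn := fun v w => X.edgesIn_conn F u v w
    have hT : ∀ h, X.edgeOf h ∈ X.edgesIn F (X.compVerts F u) →
        X.compVerts F (X.root h) = X.compVerts F u :=
      fun h hh => ((X.edgeOf_mem_edgesIn F u h).1 hh).2
    rw [← X.card_fiber F u] at hb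
    obtain ⟨l, hl, hlw⟩ := X.cycleWeight_eq o η ρ
      (X.exists_edgeCycle _ (fun v => X.compVerts F v = X.compVerts F u) ⟨u, rfl⟩ hconn hT hb)
    rw [hlw]
    exact X.det_gram_of_edgeCycle _ (fun v => X.compVerts F v = X.compVerts F u) o η ρ hconn hT
      hb hl
  · -- The numbers of edges and of vertices have equal sums over the components, so some
    -- component has fewer edges than vertices and its block is singular.
    have hex : ∃ C ∈ X.components F, (X.edgesIn F C).card < C.card := by
      by_contra! hge
      refine hbal fun C hC => ?_
      refine (((Finset.sum_eq_sum_iff_of_le hge).1 ?_) C hC).symm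
      rw [sum_card_components, X.sum_card_edgesIn F o, hF]
    obtain ⟨C, hC, hlt⟩ := hex
    refine Finset.prod_eq_zero hC ?_
    obtain ⟨u, -, rfl⟩ := Finset.mem_image.1 hC
    rw [← X.card_fiber F u] at hlt
    have := det_gram_eq_zero (Matrix.of fun (v : {v // X.compVerts F v = X.compVerts F u})
      (e : {e // e ∈ X.edgesIn F (X.compVerts F u)}) => X.incid o η ρ v e) (by simpa using hlt)
    rw [← this]
    congr 1
    ext v w
    simp only [Matrix.of_apply, Matrix.mul_apply, Matrix.conjTranspose_apply]
    exact (Finset.sum_coe_sort (X.edgesIn F (X.compVerts F u))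
      (fun e => X.incid o η ρ v e * (starRingEnd ℂ) (X.incid o η ρ w e))).symm

/-- The matrix-tree theorem for the twisted Laplacian with edge conductances `1 / x_e`. -/
lemma prod_mul_det_lapl (x : X.Edge → ℝ) (hx : ∀ e, 0 < x e) :
    (∏ e, (x e : ℂ)) * Matrix.det (Matrix.of fun v w : X.V =>
      ∑ e, (x e : ℂ)⁻¹ * (X.incid o η ρ v e * (starRingEnd ℂ) (X.incid o η ρ w e))) =
      ((MvPolynomial.eval x (freeWeightPoly X o η ρ) : ℝ) : ℂ) := by
  classical
  rw [det_sum_rankOne (X.incid o η ρ) (fun e w => (starRingEnd ℂ) (X.incid o η ρ w e)),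
    Finset.mul_sum, freeWeightPoly, map_sum, Complex.ofReal_sum]
  simp only [map_mul, MvPolynomial.eval_C, map_prod, MvPolynomial.eval_X]
  have hset : (Set.toFinite {F : Finset X.Edge |
      F.card + Fintype.card X.V = Fintype.card X.Edge ∧
      ∀ C ∈ X.components F, (X.edgesIn F C).card = C.card}).toFinset =
      (Finset.univ.filter fun F : Finset X.Edge => Fᶜ.card = Fintype.card X.V).filter
        fun F => ∀ C ∈ X.components F, (X.edgesIn F C).card = C.card := by
    ext F
    simp only [Set.Finite.mem_toFinset, Set.mem_ofPred_eq, Finset.mem_filter, Finset.mem_univ,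
      true_and]
    have h1 := F.card_add_card_compl
    refine and_congr_left fun _ => ⟨fun h => by omega, fun h => by omega⟩
  rw [hset, Finset.sum_filter]
  refine Finset.sum_nbij' (fun S => Sᶜ) (fun F => Fᶜ) ?_ ?_ ?_ ?_ ?_
  · intro S hS
    simpa using (Finset.mem_powersetCard.1 hS).2
  · intro F hF
    simpa [Finset.mem_powersetCard] using hF
  · simp
  · simp
  · intro S hS
    have hc := (Finset.mem_powersetCard.1 hS).2
    have h := X.det_gram_compl Sᶜ o η ρ (by rwa [compl_compl])
    rw [compl_compl] at h
    rw [h]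
    split_ifs
    · push_cast
      have h2 : ∏ e, (x e : ℂ) = (∏ e ∈ S, (x e : ℂ)) * ∏ e ∈ Sᶜ, (x e : ℂ) :=
        (Finset.prod_mul_prod_compl S _).symm
      have h3 : (∏ e ∈ S, (x e : ℂ)) * ∏ e ∈ S, (x e : ℂ)⁻¹ = 1 := by
        rw [← Finset.prod_mul_distrib]
        refine Finset.prod_eq_one fun e _ => mul_inv_cancel₀ ?_
        exact_mod_cast (hx e).ne'
      rw [h2]
      linear_combination (∏ e ∈ Sᶜ, (x e : ℂ)) * (basisWeight X o η ρ Sᶜ : ℂ) * h3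
    · simp
end
end SerreGraph

/-! ### The determinant formula and the behaviour at `s = 1` -/

namespace SerreGraph
section
variable (X : SerreGraph) (o : X.Orientation)

/-- Half-edges as two copies of the edges, according to the orientation. -/
noncomputable def halfEquiv : X.Edge ⊕ X.Edge ≃ X.H :=
  Equiv.ofBijective (Sum.elim o.pick fun e => X.inv (o.pick e)) <| by
    constructor
    · rintro (e | e) (f | f) h <;> simp only [Sum.elim_inl, Sum.elim_inr] at h
      · rw [← o.pick_spec e, h, o.pick_spec]
      · have hef : e = f := by rw [← o.pick_spec e, h, X.edgeOf_inv, o.pick_spec]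
        rw [hef] at h
        exact absurd h.symm (X.inv_ne _)
      · have hef : e = f := by rw [← o.pick_spec e, ← X.edgeOf_inv, h, o.pick_spec]
        rw [hef] at h
        exact absurd h (X.inv_ne _)
      · have hef : e = f := by rw [← o.pick_spec e, ← X.edgeOf_inv, h, X.edgeOf_inv, o.pick_spec]
        rw [hef]
    · intro h
      rcases (X.edgeOf_eq_iff h (o.pick (X.edgeOf h))).1 (o.pick_spec _).symm with hp | hp
      · exact ⟨.inl (X.edgeOf h), hp⟩
      · exact ⟨.inr (X.edgeOf h), by simp [hp, X.inv_inv]⟩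

@[simp] lemma halfEquiv_inl (e : X.Edge) : X.halfEquiv o (.inl e) = o.pick e := rfl
@[simp] lemma halfEquiv_inr (e : X.Edge) : X.halfEquiv o (.inr e) = X.inv (o.pick e) := rfl

/-- Summing over half-edges amounts to summing over edges the contributions of both directions. -/
lemma sum_half (f : X.H → ℂ) : ∑ h, f h = ∑ e, (f (o.pick e) + f (X.inv (o.pick e))) := by
  rw [← Equiv.sum_comp (X.halfEquiv o), Fintype.sum_sum_type, Finset.sum_add_distrib]
  rfl

/-- The determinant of the edge matrix that only keeps backtracks. -/
lemma det_backtrack (X : SerreGraph) (o : X.Orientation) (u : X.H → ℂ) (t : X.Edge → ℂ)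
    (hu : ∀ h, u h * u (X.inv h) = t (X.edgeOf h) ^ 2) :
    Matrix.det (Matrix.of fun a b : X.H =>
      (if a = b then 1 else 0) + u a * (if b = X.inv a then 1 else 0)) =
      ∏ e, (1 - t e ^ 2) := by
  rw [← Matrix.det_submatrix_equiv_self (X.halfEquiv o)]
  have hb : (Matrix.of fun a b : X.H =>
      (if a = b then 1 else 0) + u a * (if b = X.inv a then 1 else 0)).submatrix
        (X.halfEquiv o) (X.halfEquiv o) =
      Matrix.fromBlocks 1 (Matrix.diagonal fun e => u (o.pick e))
        (Matrix.diagonal fun e => u (X.inv (o.pick e))) 1 := by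
    have hinj : ∀ e f, o.pick e = o.pick f ↔ e = f := fun e f =>
      ⟨fun h => by rw [← o.pick_spec e, h, o.pick_spec], fun h => by rw [h]⟩
    have hinv : ∀ a b : X.H, X.inv a = X.inv b ↔ a = b := fun a b =>
      ⟨fun h => by rw [← X.inv_inv a, h, X.inv_inv], fun h => by rw [h]⟩
    have hne : ∀ e f, o.pick e ≠ X.inv (o.pick f) := fun e f h => by
      have hef : e = f := by rw [← o.pick_spec e, h, X.edgeOf_inv, o.pick_spec]
      rw [hef] at h
      exact X.inv_ne _ h.symm
    ext (e | e) (f | f)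
    · simp [Matrix.one_apply, hinj, hne]
    · simp [Matrix.diagonal_apply, hinj, hinv, hne, eq_comm]
    · by_cases hef : e = f
      · simp [hef, X.inv_inv, (hne _ _).symm]
      · simp [hef, hinj, X.inv_inv, (hne _ _).symm, Ne.symm hef]
    · simp [Matrix.one_apply, hinj, hinv, X.inv_inv, (hne _ _).symm]
  rw [hb, Matrix.det_fromBlocks_one₁₁, Matrix.diagonal_mul_diagonal, ← Matrix.diagonal_one,
    Matrix.diagonal_sub, Matrix.det_diagonal]
  refine Finset.prod_congr rfl fun e _ => ?_
  rw [mul_comm, hu, o.pick_spec]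

/-- The three-term (Bass-type) determinant formula with arbitrary edge variables: the non-backtracking
edge matrix is a perturbation, factoring through the vertices, of the matrix `D` that only keeps
backtracks, so its determinant reduces to one indexed by the vertices. -/
lemma det_edge_eq_det_vertex (X : SerreGraph) (o : X.Orientation) (u : X.H → ℂ) (t : X.Edge → ℂ)
    (hu : ∀ h, u h * u (X.inv h) = t (X.edgeOf h) ^ 2) (ht : ∀ e, 1 - t e ^ 2 ≠ 0) :
    Matrix.det ((1 : Matrix X.H X.H ℂ) - Matrix.of fun a b : X.H =>
      if X.root (X.inv a) = X.root b ∧ b ≠ X.inv a then u a else 0) =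
    (∏ e, (1 - t e ^ 2)) * Matrix.det (Matrix.of fun v w : X.V =>
      (if v = w then 1 else 0) - ∑ a : X.H, (if X.root a = v then 1 else 0) *
        ((u a * (if X.root (X.inv a) = w then 1 else 0) -
          t (X.edgeOf a) ^ 2 * (if X.root a = w then 1 else 0)) *
            (1 - t (X.edgeOf a) ^ 2)⁻¹)) := by
  set D : Matrix X.H X.H ℂ := Matrix.of fun a b : X.H =>
      (if a = b then 1 else 0) + u a * (if b = X.inv a then 1 else 0) with hD
  set Q : Matrix X.H X.V ℂ := Matrix.of fun a w =>
    (u a * (if X.root (X.inv a) = w then 1 else 0) -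
          t (X.edgeOf a) ^ 2 * (if X.root a = w then 1 else 0)) *
            (1 - t (X.edgeOf a) ^ 2)⁻¹ with hQ
  set S : Matrix X.V X.H ℂ := Matrix.of fun v a => if X.root a = v then 1 else 0 with hS
  -- `Q` is `D⁻¹` applied to the half-edge-to-end-vertex matrix weighted by `u`.
  have hDQ : D * Q = Matrix.of fun a w => u a * (if X.root (X.inv a) = w then 1 else 0) := by
    ext a w
    have h1 : (D * Q) a w = Q a w + u a * Q (X.inv a) w := by
      simp only [Matrix.mul_apply, hD, Matrix.of_apply, add_mul, Finset.sum_add_distrib, ite_mul,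
        one_mul, zero_mul, mul_assoc, Finset.sum_ite_eq, Finset.mem_univ, if_true, mul_ite,
        mul_zero, Finset.sum_ite_eq']
    rw [h1]
    simp only [hQ, Matrix.of_apply, X.inv_inv, X.edgeOf_inv]
    have h2 := ht (X.edgeOf a)
    have h3 := hu a
    field_simp
    linear_combination (if X.root a = w then (1 : ℂ) else 0) * h3
  have hW : (1 : Matrix X.H X.H ℂ) - (Matrix.of fun a b : X.H =>
      if X.root (X.inv a) = X.root b ∧ b ≠ X.inv a then u a else 0) = D * (1 - Q * S) := by
    rw [Matrix.mul_sub, ← Matrix.mul_assoc, hDQ, Matrix.mul_one]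
    ext a b
    simp only [Matrix.sub_apply, Matrix.one_apply, Matrix.of_apply, Matrix.mul_apply, hD, hS]
    have : ∑ w, u a * (if X.root (X.inv a) = w then 1 else 0) * (if X.root b = w then 1 else 0) =
        if X.root (X.inv a) = X.root b then u a else 0 := by
      simp [eq_comm]
    rw [this]
    by_cases hb : b = X.inv a
    · simp [hb]
    · simp [hb]
  rw [hW, Matrix.det_mul, X.det_backtrack o u t hu, Matrix.det_one_sub_mul_comm]
  congr 2

variable {G : Type} [Group G] (η : X.Edge → G) (ρ : G →* ℂ)

lemma halfVoltage_pick (e : X.Edge) : X.halfVoltage o η (o.pick e) = η e := by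
  rw [halfVoltage, o.pick_spec, if_pos rfl]

lemma analyticAt_LMInv (x : X.Edge → ℝ) : AnalyticAt ℝ (X.LMInv o η ρ x) 1 := by
  have hpow : ∀ y : ℝ, AnalyticAt ℝ (fun s : ℝ => ((s ^ y : ℝ) : ℂ)) 1 := by
    intro y
    have h1 : AnalyticAt ℝ (fun s : ℝ => s ^ y) 1 := by
      have h2 : AnalyticAt ℝ (fun s : ℝ => Real.exp (Real.log s * y)) 1 :=
        ((analyticAt_log one_pos).mul analyticAt_const).rexp
      refine h2.congr ?_
      filter_upwards [lt_mem_nhds (one_pos : (0 : ℝ) < 1)] with s hs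
      exact (Real.rpow_def_of_pos hs y).symm
    exact (Complex.ofRealCLM.analyticAt _).comp h1
  unfold LMInv
  simp only [Matrix.det_apply]
  refine Finset.analyticAt_fun_sum _ fun σ _ => ?_
  refine AnalyticAt.const_smul ?_
  refine Finset.analyticAt_fun_prod _ fun i _ => ?_
  simp only [Matrix.sub_apply, Matrix.of_apply]
  refine AnalyticAt.sub analyticAt_const ?_
  split_ifs
  · exact analyticAt_const.mul (hpow _)
  · exact analyticAt_const

variable [Finite G]

/-- The rescaled vertex matrix degenerates to the twisted Laplacian with conductances `1 / x_e`. -/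
lemma sum_half_eq_lapl (x : X.Edge → ℝ) (v w : X.V) :
    - ∑ a : X.H, (if X.root a = v then 1 else 0) *
        ((ρ (X.halfVoltage o η a) * (if X.root (X.inv a) = w then 1 else 0) -
          (if X.root a = w then 1 else 0)) * (-2 * (x (X.edgeOf a) : ℂ))⁻¹) =
    (-1 / 2 : ℂ) *
      ∑ e, (x e : ℂ)⁻¹ * (X.incid o η ρ v e * (starRingEnd ℂ) (X.incid o η ρ w e)) := by
  rw [X.sum_half o, Finset.mul_sum, ← Finset.sum_neg_distrib]
  refine Finset.sum_congr rfl fun e _ => ?_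
  simp only [incid, halfIncid, X.edgeOf_inv, o.pick_spec, X.inv_inv, halfVoltage_inv,
    halfVoltage_pick, char_inv, map_sub, map_mul, Complex.conj_conj, mul_inv]
  simp only [apply_ite (starRingEnd ℂ), map_one, map_zero]
  have h := char_mul_conj ρ (η e)
  linear_combination (1 / 2 : ℂ) * (x e : ℂ)⁻¹ * (if X.root (X.inv (o.pick e)) = v then 1 else 0) *
    (if X.root (X.inv (o.pick e)) = w then 1 else 0) * h

/-- The factor `1 - s ^ (2 y)` of the determinant formula has a simple zero at `s = 1`. -/
lemma tendsto_ratio (y : ℝ) : Filter.Tendsto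
    (fun s : ℝ => (1 - ((s ^ y : ℝ) : ℂ) ^ 2) / ((s : ℂ) - 1)) (nhdsWithin 1 {1}ᶜ)
    (nhds (-2 * (y : ℂ))) := by
  have h1 : HasDerivAt (fun s : ℝ => 1 - (s ^ y) ^ 2) (-2 * y) 1 := by
    have h := ((Real.hasDerivAt_rpow_const (x := 1) (p := y) (Or.inl one_ne_zero)).pow 2).const_sub 1
    simpa using h
  rw [hasDerivAt_iff_tendsto_slope] at h1
  have h2 := (Complex.continuous_ofReal.tendsto _).comp h1
  have h3 : ((-2 * y : ℝ) : ℂ) = -2 * (y : ℂ) := by push_cast; ring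
  rw [h3] at h2
  refine h2.congr fun s => ?_
  simp [slope_def_field]

/-- The leading coefficient of the reciprocal `L`-function at `s = 1`. -/
lemma tendsto_LMInv_div (x : X.Edge → ℝ) (hx : ∀ e, 0 < x e) (k : ℕ)
    (hk : Fintype.card X.Edge = Fintype.card X.V + k) :
    Filter.Tendsto (fun s : ℝ => X.LMInv o η ρ x s / ((s : ℂ) - 1) ^ k) (nhdsWithin 1 {1}ᶜ)
      (nhds (2 ^ k * (-1 : ℂ) ^ k *
        ((MvPolynomial.eval x (freeWeightPoly X o η ρ) : ℝ) : ℂ))) := by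
  -- `N s` is `s - 1` times the vertex matrix of the three-term formula; it extends to `s = 1`.
  let q : X.Edge → ℝ → ℂ := fun e s => (1 - ((s ^ x e : ℝ) : ℂ) ^ 2) / ((s : ℂ) - 1)
  let N : ℝ → Matrix X.V X.V ℂ := fun s => Matrix.of fun v w =>
    ((s : ℂ) - 1) * (if v = w then 1 else 0) - ∑ a : X.H, (if X.root a = v then 1 else 0) *
        ((ρ (X.halfVoltage o η a) * ((s ^ x (X.edgeOf a) : ℝ) : ℂ) *
            (if X.root (X.inv a) = w then 1 else 0) -
          ((s ^ x (X.edgeOf a) : ℝ) : ℂ) ^ 2 * (if X.root a = w then 1 else 0)) *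
            (q (X.edgeOf a) s)⁻¹)
  let L : Matrix X.V X.V ℂ := Matrix.of fun v w =>
    ∑ e, (x e : ℂ)⁻¹ * (X.incid o η ρ v e * (starRingEnd ℂ) (X.incid o η ρ w e))
  have hq : ∀ e, Filter.Tendsto (q e) (nhdsWithin 1 {1}ᶜ) (nhds (-2 * (x e : ℂ))) :=
    fun e => tendsto_ratio (x e)
  have hs : Filter.Tendsto (fun s : ℝ => (s : ℂ)) (nhdsWithin 1 {1}ᶜ) (nhds 1) := by
    have := (Complex.continuous_ofReal.tendsto 1).mono_left
      (nhdsWithin_le_nhds (s := ({1}ᶜ : Set ℝ)))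
    simpa using this
  have hp : ∀ y : ℝ, Filter.Tendsto (fun s : ℝ => ((s ^ y : ℝ) : ℂ)) (nhdsWithin 1 {1}ᶜ)
      (nhds 1) := by
    intro y
    have h1 := (Real.continuousAt_rpow_const 1 y (Or.inl one_ne_zero)).tendsto.mono_left
      (nhdsWithin_le_nhds (s := ({1}ᶜ : Set ℝ)))
    have := (Complex.continuous_ofReal.tendsto _).comp h1
    simpa [Function.comp_def] using this
  have hN : Filter.Tendsto N (nhdsWithin 1 {1}ᶜ) (nhds ((-1 / 2 : ℂ) • L)) := by
    refine tendsto_pi_nhds.2 fun v => tendsto_pi_nhds.2 fun w => ?_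
    have hlim : ((-1 / 2 : ℂ) • L) v w = (1 - 1) * (if v = w then 1 else 0) -
        ∑ a : X.H, (if X.root a = v then 1 else 0) *
        ((ρ (X.halfVoltage o η a) * 1 * (if X.root (X.inv a) = w then 1 else 0) -
          1 ^ 2 * (if X.root a = w then 1 else 0)) * (-2 * (x (X.edgeOf a) : ℂ))⁻¹) := by
      simp only [one_pow, one_mul, mul_one, sub_self, zero_mul, zero_sub]
      rw [X.sum_half_eq_lapl o η ρ x v w]
      rfl
    rw [hlim]
    refine ((hs.sub_const 1).mul_const _).sub (tendsto_finsetSum _ fun a _ => ?_)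
    have hne : -2 * (x (X.edgeOf a) : ℂ) ≠ 0 :=
      mul_ne_zero (by norm_num) (by exact_mod_cast (hx _).ne')
    exact ((((((hp _).const_mul _).mul_const _).sub (((hp _).pow 2).mul_const _))).mul
      ((hq _).inv₀ hne)).const_mul _
  have hdet : Filter.Tendsto (fun s => (∏ e, q e s) * (N s).det) (nhdsWithin 1 {1}ᶜ)
      (nhds ((∏ e, (-2 * (x e : ℂ))) * ((-1 / 2 : ℂ) • L).det)) :=
    (tendsto_finsetProd _ fun e _ => hq e).mul
      (((continuous_id.matrix_det).tendsto ((-1 / 2 : ℂ) • L)).comp hN)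
  have hval : (∏ e, (-2 * (x e : ℂ))) * ((-1 / 2 : ℂ) • L).det = 2 ^ k * (-1 : ℂ) ^ k *
        ((MvPolynomial.eval x (freeWeightPoly X o η ρ) : ℝ) : ℂ) := by
    rw [← X.prod_mul_det_lapl o η ρ x hx, Matrix.det_smul, Finset.prod_mul_distrib,
      Finset.prod_const, Finset.card_univ, hk, pow_add, ← mul_pow]
    have h1 : (-2 : ℂ) ^ Fintype.card X.V * (-1 / 2 : ℂ) ^ Fintype.card X.V = 1 := by
      rw [← mul_pow]; norm_num
    have h2 : (2 * -1 : ℂ) ^ k = (-2) ^ k := by norm_num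
    rw [h2]
    linear_combination (-2 : ℂ) ^ k * (∏ e, (x e : ℂ)) * L.det * h1
  rw [hval] at hdet
  refine hdet.congr' ?_
  have hpos : ∀ᶠ s : ℝ in nhdsWithin 1 {1}ᶜ, 0 < s :=
    nhdsWithin_le_nhds (lt_mem_nhds one_pos)
  filter_upwards [hpos, self_mem_nhdsWithin] with s hs0 hs1
  have hs1' : s ≠ 1 := hs1
  have hsne : (s : ℂ) - 1 ≠ 0 := by
    rw [sub_ne_zero]; exact_mod_cast hs1'
  have ht : ∀ e, 1 - ((s ^ x e : ℝ) : ℂ) ^ 2 ≠ 0 := by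
    intro e hcon
    have h1 : (s ^ x e) ^ 2 = 1 := by
      have : ((s ^ x e : ℝ) : ℂ) ^ 2 = 1 := (sub_eq_zero.1 hcon).symm
      exact_mod_cast this
    have h2 : s ^ x e = 1 := by
      have := Real.rpow_pos_of_pos hs0 (x e)
      nlinarith
    rw [← Real.one_rpow (x e)] at h2
    exact hs1' ((Real.rpow_left_inj hs0.le zero_le_one (hx e).ne').1 h2)
  have hdf := X.det_edge_eq_det_vertex o
    (fun a => ρ (X.halfVoltage o η a) * ((s ^ x (X.edgeOf a) : ℝ) : ℂ))
    (fun e => ((s ^ x e : ℝ) : ℂ)) (fun h => by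
      rw [X.edgeOf_inv, halfVoltage_inv, char_inv]
      linear_combination ((s ^ x (X.edgeOf h) : ℝ) : ℂ) ^ 2 *
        char_mul_conj ρ (X.halfVoltage o η h)) ht
  rw [LMInv, hdf]
  have hNs : N s = ((s : ℂ) - 1) • Matrix.of fun v w : X.V =>
      (if v = w then 1 else 0) - ∑ a : X.H, (if X.root a = v then 1 else 0) *
        ((ρ (X.halfVoltage o η a) * ((s ^ x (X.edgeOf a) : ℝ) : ℂ) *
            (if X.root (X.inv a) = w then 1 else 0) -
          ((s ^ x (X.edgeOf a) : ℝ) : ℂ) ^ 2 * (if X.root a = w then 1 else 0)) *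
            (1 - ((s ^ x (X.edgeOf a) : ℝ) : ℂ) ^ 2)⁻¹) := by
    ext v w
    simp only [N, q, Matrix.of_apply, Matrix.smul_apply, smul_eq_mul, mul_sub, Finset.mul_sum,
      inv_div]
    congr 1
    exact Finset.sum_congr rfl fun a _ => by ring
  rw [hNs, Matrix.det_smul]
  simp only [q, Finset.prod_div_distrib, Finset.prod_const, Finset.card_univ]
  rw [hk, pow_add]
  field_simp
end
end SerreGraph

open SerreGraph Asymptotics in
/-- **Proposition.** For a free `G`-cover `p : X̃ → X` of a finite connected graph of genus
`g` with finite abelian Galois group `G`, defined by a `G`-voltage assignment `η`, and a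
nontrivial character `ρ : G → ℂ*`, the reciprocal of the metric Artin `L`-function has
Taylor expansion
`L_M(s, x_e, X̃/X, ρ)⁻¹ = 2^{g-1} (-1)^{g-1} P_{X̃/X,ρ}(x_e) (s-1)^{g-1} + O((s-1)^g)`
at `s = 1`. -/
theorem LMInv_taylor_at_one
    (G : Type) [CommGroup G] [Fintype G] (X Xt : SerreGraph)
    (hX : X.Connected)
    (c : GCover G Xt X) (hfree : c.IsFree)
    (o : X.Orientation) (σ : X.V → Xt.V) (η : X.Edge → G)
    (hrep : c.IsVoltageRep o σ η)
    (ρ : G →* ℂ) (hρ : ρ ≠ 1)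
    (x : X.Edge → ℝ) (hx : ∀ e, 0 < x e) :
    (fun s : ℝ => X.LMInv o η ρ x s -
        (2 ^ (X.genus - 1) * (-1 : ℂ) ^ (X.genus - 1) *
          ((MvPolynomial.eval x (freeWeightPoly X o η ρ) : ℝ) : ℂ)) *
          ((s : ℂ) - 1) ^ (X.genus - 1))
      =O[nhds 1] fun s : ℝ => (s - 1) ^ X.genus := by
  set C : ℂ := 2 ^ (X.genus - 1) * (-1 : ℂ) ^ (X.genus - 1) *
          ((MvPolynomial.eval x (freeWeightPoly X o η ρ) : ℝ) : ℂ) with hC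
  have hsub : AnalyticAt ℝ (fun s : ℝ => (s : ℂ) - 1) 1 :=
    (Complex.ofRealCLM.analyticAt _).sub analyticAt_const
  have han : AnalyticAt ℝ (fun s : ℝ => X.LMInv o η ρ x s -
      C * ((s : ℂ) - 1) ^ (X.genus - 1)) 1 :=
    (X.analyticAt_LMInv o η ρ x).sub (analyticAt_const.mul (hsub.pow _))
  -- For a tree the assertion is mere boundedness.
  rcases Nat.eq_zero_or_pos X.genus with hg | hg
  · rw [hg] at han ⊢
    simp only [pow_zero]
    exact han.continuousAt.tendsto.isBigO_one ℝ
  have hk : Fintype.card X.Edge = Fintype.card X.V + (X.genus - 1) := by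
    rw [genus] at hg ⊢
    omega
  have hlim := X.tendsto_LMInv_div o η ρ x hx _ hk
  rw [← hC] at hlim
  -- An analytic function that is `o((s - 1) ^ (g - 1))` vanishes to order at least `g`.
  by_cases hzero : ∀ᶠ s : ℝ in nhds 1, X.LMInv o η ρ x s -
      C * ((s : ℂ) - 1) ^ (X.genus - 1) = 0
  · exact (isBigO_zero _ _).congr' (hzero.mono fun s hs => hs.symm) .rfl
  obtain ⟨n, g, hgan, hg1, hgeq⟩ := han.exists_eventuallyEq_pow_smul_nonzero_iff.2 hzero
  have hn : X.genus ≤ n := by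
    by_contra! hlt
    obtain ⟨m, hm⟩ : ∃ m, X.genus - 1 = n + m := ⟨X.genus - 1 - n, by omega⟩
    refine hg1 ?_
    have hs : Filter.Tendsto (fun s : ℝ => ((s : ℂ) - 1) ^ m) (nhdsWithin 1 {1}ᶜ)
        (nhds ((((1 : ℝ) : ℂ) - 1) ^ m)) :=
      (hsub.pow m).continuousAt.tendsto.mono_left nhdsWithin_le_nhds
    have h1 : Filter.Tendsto g (nhdsWithin 1 {1}ᶜ) (nhds 0) := by
      have h2 := (hlim.sub_const C).mul hs
      rw [sub_self, zero_mul] at h2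
      refine h2.congr' ?_
      filter_upwards [nhdsWithin_le_nhds hgeq, self_mem_nhdsWithin] with s hs1 hs2
      have hs2' : s ≠ 1 := hs2
      have hsne : (s : ℂ) - 1 ≠ 0 := by
        rw [sub_ne_zero]; exact_mod_cast hs2'
      have h3 : (s - 1) ^ n • g s = ((s : ℂ) - 1) ^ n * g s := by
        rw [Complex.real_smul]; push_cast; rfl
      rw [h3, hm, pow_add] at hs1
      rw [hm, pow_add]
      refine mul_left_cancel₀ (pow_ne_zero n hsne) (Eq.trans ?_ hs1)
      field_simp
    exact tendsto_nhds_unique (hgan.continuousAt.tendsto.mono_left nhdsWithin_le_nhds) h1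
  have hO : (fun s : ℝ => (s - 1) ^ n • g s) =O[nhds 1] fun s : ℝ => (s - 1) ^ X.genus := by
    obtain ⟨j, rfl⟩ := Nat.exists_eq_add_of_le hn
    have hb : Filter.Tendsto (fun s : ℝ => (s - 1) ^ j • g s) (nhds 1)
        (nhds ((1 - 1 : ℝ) ^ j • g 1)) :=
      ((continuous_id.sub continuous_const).pow j).continuousAt.tendsto.smul
        hgan.continuousAt.tendsto
    have := (isBigO_refl (fun s : ℝ => (s - 1) ^ X.genus) (nhds 1)).smul (hb.isBigO_one ℝ)
    simpa [pow_add, mul_assoc] using this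
  exact hO.congr' (hgeq.mono fun s hs => hs.symm) .rfl
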